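/- arXiv:2204.05824 — 8 statements merged into one kernel-verified Lean document; each statement's English description precedes it below -/
import Mathlib

section
/- For every real number α > 1, the set S_α = { j² − α²ℓ² : ℓ a nonnegative integer, j a positive zero of J_ℓ } is unbounded from above and unbounded from below. -/
open Real Filter Set

/-- The Bessel function of the first kind of order `ν`. -/
noncomputable def besselJ (ν x : ℝ) : ℝ :=
  ∑' m : ℕ, (-1 : ℝ) ^ m / (m.factorial * Real.Gamma (m + ν + 1)) * (x / 2) ^ (2 * (m : ℝ) + ν)

/-- `j` is a positive zero of the Bessel function `J_ν`. -/
def IsPosBesselZero (ν j : ℝ) : Prop := 0 < j ∧ besselJ ν j = 0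

noncomputable def bterm (l k m : ℕ) (t : ℝ) : ℝ :=
  (((2 * m + l : ℕ) : ℝ)) ^ k * ((-1 : ℝ) ^ m / (m.factorial * (m + l).factorial)) *
    (Real.exp t / 2) ^ (2 * m + l)

noncomputable def bbound (l k m : ℕ) (T : ℝ) : ℝ :=
  ((2 : ℝ) ^ k * (Real.exp T / 2)) ^ l *
    ((((2 : ℝ) ^ k * (Real.exp T / 2)) ^ 2) ^ m / m.factorial)

lemma bbound_summable (l k : ℕ) (T : ℝ) : Summable (fun m => bbound l k m T) :=
  (Real.summable_pow_div_factorial _).mul_left _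

lemma bterm_le (l k m : ℕ) (t T : ℝ) (h : t ≤ T) : ‖bterm l k m t‖ ≤ bbound l k m T := by
  have h1 : (((2 * m + l : ℕ) : ℝ)) ^ k ≤ ((2 : ℝ) ^ k) ^ (2 * m + l) := by
    rw [← pow_mul, mul_comm k, pow_mul]
    gcongr
    exact_mod_cast Nat.lt_two_pow_self.le
  have h2 : (Real.exp t / 2) ^ (2 * m + l) ≤ (Real.exp T / 2) ^ (2 * m + l) := by gcongr
  have h3 : ‖((-1 : ℝ) ^ m / (m.factorial * (m + l).factorial))‖ ≤ 1 / m.factorial := by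
    rw [norm_div, norm_pow, norm_neg, norm_one, one_pow, Real.norm_of_nonneg (by positivity)]
    have : (1 : ℝ) ≤ (m + l).factorial := by exact_mod_cast Nat.factorial_pos _
    have h0 : (0 : ℝ) < m.factorial := by exact_mod_cast Nat.factorial_pos _
    apply one_div_le_one_div_of_le h0
    nlinarith
  unfold bterm bbound
  rw [norm_mul, norm_mul, Real.norm_of_nonneg (by positivity : (0 : ℝ) ≤ (((2 * m + l : ℕ) : ℝ)) ^ k),
    Real.norm_of_nonneg (by positivity : (0 : ℝ) ≤ (Real.exp t / 2) ^ (2 * m + l))]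
  calc _ ≤ ((2 : ℝ) ^ k) ^ (2 * m + l) * (1 / m.factorial) * (Real.exp T / 2) ^ (2 * m + l) := by
        gcongr
    _ = _ := by
        rw [← pow_mul (2 ^ k * (Real.exp T / 2)), mul_pow, mul_pow, pow_add, pow_add]; ring

lemma bterm_summable (l k : ℕ) (t : ℝ) : Summable (fun m => bterm l k m t) :=
  Summable.of_norm_bounded (bbound_summable l k t) (fun m => bterm_le l k m t t le_rfl)

lemma bterm_deriv (l k m : ℕ) (t : ℝ) : HasDerivAt (bterm l k m) (bterm l (k+1) m t) t := by
  have h1 : HasDerivAt (fun t => (Real.exp t / 2)) (Real.exp t / 2) t :=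
    (Real.hasDerivAt_exp t).div_const 2
  have h2 := (h1.pow (2 * m + l)).const_mul
    ((((2 * m + l : ℕ) : ℝ)) ^ k * ((-1 : ℝ) ^ m / (m.factorial * (m + l).factorial)))
  refine HasDerivAt.congr_deriv (f := bterm l k m) h2 ?_
  unfold bterm
  rcases Nat.eq_zero_or_pos (2 * m + l) with h | h
  · rw [h]; simp
  · obtain ⟨n, hn⟩ := Nat.exists_eq_succ_of_ne_zero h.ne'
    rw [hn]; simp only [Nat.succ_eq_add_one, Nat.add_sub_cancel]; ring

noncomputable def bsum (l k : ℕ) (t : ℝ) : ℝ := ∑' m, bterm l k m t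

lemma bsum_deriv (l k : ℕ) (t : ℝ) : HasDerivAt (bsum l k) (bsum l (k+1) t) t := by
  refine hasDerivAt_tsum_of_isPreconnected (bbound_summable l (k+1) (t+1)) (isOpen_Iio (a := t+1))
    isPreconnected_Iio (fun m y _ => bterm_deriv l k m y)
    (fun m y hy => bterm_le _ _ _ _ _ (le_of_lt hy)) (y₀ := t) ?_ (bterm_summable l k t) ?_
  · simp
  · simp

lemma bsum_ode (l : ℕ) (t : ℝ) :
    bsum l 2 t = -(Real.exp t ^ 2 - (l : ℝ) ^ 2) * bsum l 0 t := by
  have hs : Summable (fun m => bterm l 2 m t - (l : ℝ) ^ 2 * bterm l 0 m t) :=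
    (bterm_summable l 2 t).sub ((bterm_summable l 0 t).mul_left _)
  have h1 : bsum l 2 t - (l : ℝ) ^ 2 * bsum l 0 t =
      ∑' m, (bterm l 2 m t - (l : ℝ) ^ 2 * bterm l 0 m t) := by
    unfold bsum
    rw [(bterm_summable l 2 t).tsum_sub ((bterm_summable l 0 t).mul_left _), tsum_mul_left]
  rw [hs.tsum_eq_zero_add] at h1
  have h2 : ∀ m, bterm l 2 (m+1) t - (l : ℝ) ^ 2 * bterm l 0 (m+1) t =
      -(Real.exp t ^ 2) * bterm l 0 m t := by
    intro m
    unfold bterm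
    have e1 : 2 * (m + 1) + l = (2 * m + l) + 2 := by ring
    have e2 : m + 1 + l = (m + l) + 1 := by ring
    rw [e1, e2, Nat.factorial_succ, Nat.factorial_succ]
    have f1 : (m.factorial : ℝ) ≠ 0 := by positivity
    have f2 : ((m + l).factorial : ℝ) ≠ 0 := by positivity
    have f3 : ((m : ℝ) + 1) ≠ 0 := by positivity
    have f4 : ((m : ℝ) + l + 1) ≠ 0 := by positivity
    push_cast
    rw [pow_add (Real.exp t / 2) (2 * m + l) 2]
    field_simp
    ring
  rw [tsum_congr h2, tsum_mul_left] at h1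
  have h3 : bterm l 2 0 t - (l : ℝ) ^ 2 * bterm l 0 0 t = 0 := by
    unfold bterm; simp; ring
  rw [h3] at h1
  unfold bsum at h1 ⊢
  linarith

lemma bsum_eq (l : ℕ) (t : ℝ) : besselJ l (Real.exp t) = bsum l 0 t := by
  unfold besselJ bsum
  refine tsum_congr fun m => ?_
  unfold bterm
  have e1 : Real.Gamma ((m : ℝ) + l + 1) = (m + l).factorial := by
    rw [← Real.Gamma_nat_eq_factorial]; push_cast; rfl
  have e2 : 2 * (m : ℝ) + l = ((2 * m + l : ℕ) : ℝ) := by push_cast; rfl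
  rw [e1, e2, Real.rpow_natCast]; simp

lemma sturm_pos (u u' u'' : ℝ → ℝ) (hu : ∀ t, HasDerivAt u (u' t) t)
    (hu' : ∀ t, HasDerivAt u' (u'' t) t) (a w : ℝ) (hw : 0 < w)
    (hq : ∀ t ∈ Icc a (a + π / w), 0 < u t → u'' t ≤ -(w ^ 2) * u t) 
    (hpos : ∀ t ∈ Icc a (a + π / w), 0 < u t) : False := by
  have hl : 0 < π / w := div_pos pi_pos hw
  have hθ : ∀ t, HasDerivAt (fun t => w * (t - a)) w t := fun t => by
    simpa using ((hasDerivAt_id t).sub_const a).const_mul w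
  have hW : ∀ t, HasDerivAt (fun t => u' t * sin (w * (t - a)) - u t * (cos (w * (t - a)) * w))
      ((u'' t + w ^ 2 * u t) * sin (w * (t - a))) t := fun t => by
    refine (((hu' t).mul (hθ t).sin).sub ((hu t).mul ((hθ t).cos.mul_const w))).congr_deriv ?_
    ring
  have hanti : AntitoneOn (fun t => u' t * sin (w * (t - a)) - u t * (cos (w * (t - a)) * w))
      (Icc a (a + π / w)) := by
    apply antitoneOn_of_deriv_nonpos (convex_Icc _ _)
    · exact fun t _ => (hW t).continuousAt.continuousWithinAt
    · exact fun t _ => (hW t).differentiableAt.differentiableWithinAt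
    · intro t ht
      rw [(hW t).deriv]
      have ht' := interior_subset ht
      have := hq t ht' (hpos t ht')
      apply mul_nonpos_of_nonpos_of_nonneg (by linarith)
      apply sin_nonneg_of_nonneg_of_le_pi
      · exact mul_nonneg hw.le (by linarith [ht'.1])
      · have : t - a ≤ π / w := by linarith [ht'.2]
        rw [le_div_iff₀ hw] at this; linarith
  have h := hanti (left_mem_Icc.2 (by linarith)) (right_mem_Icc.2 (by linarith)) (by linarith : a ≤ a + π / w)
  have e : w * (a + π / w - a) = π := by field_simp; ring
  simp only [e, sub_self, mul_zero, sin_zero, cos_zero, sin_pi, cos_pi] at h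
  have p1 := mul_pos (hpos a (left_mem_Icc.2 (by linarith))) hw
  have p2 := mul_pos (hpos _ (right_mem_Icc.2 (by linarith : a ≤ a + π / w))) hw
  linarith

lemma bessel_zero (l : ℕ) (a w : ℝ) (hw : 0 < w) (h : w ^ 2 + (l : ℝ) ^ 2 ≤ Real.exp a ^ 2) :
    ∃ t ∈ Icc a (a + π / w), IsPosBesselZero l (Real.exp t) := by
  by_contra! hno
  have hl : 0 < π / w := div_pos pi_pos hw
  have hne : ∀ t ∈ Icc a (a + π / w), bsum l 0 t ≠ 0 := fun t ht h0 =>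
    hno t ht ⟨exp_pos t, (bsum_eq l t).trans h0⟩
  have hcont : Continuous (bsum l 0) :=
    continuous_iff_continuousAt.2 fun t => (bsum_deriv l 0 t).continuousAt
  have hq : ∀ t ∈ Icc a (a + π / w), w ^ 2 ≤ Real.exp t ^ 2 - (l : ℝ) ^ 2 := by
    intro t ht
    have : Real.exp a ^ 2 ≤ Real.exp t ^ 2 := by
      have := exp_le_exp.2 ht.1
      gcongr
    linarith
  have ha : a ∈ Icc a (a + π / w) := left_mem_Icc.2 (by linarith)
  have hpre : IsPreconnected (Icc a (a + π / w)) := isPreconnected_Icc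
  rcases lt_or_gt_of_ne (hne a ha) with h0 | h0
  · refine sturm_pos (fun t => -bsum l 0 t) (fun t => -bsum l 1 t) (fun t => -bsum l 2 t)
      (fun t => (bsum_deriv l 0 t).neg) (fun t => (bsum_deriv l 1 t).neg) a w hw ?_ ?_
    · intro t ht hp
      have := hq t ht
      simp only [bsum_ode]
      nlinarith
    · intro t ht
      by_contra! hc
      obtain ⟨s, hs, hs0⟩ := hpre.intermediate_value ha ht hcont.continuousOn
        (show (0 : ℝ) ∈ Icc _ _ from ⟨h0.le, by linarith⟩)
      exact hne s hs hs0
  · refine sturm_pos (bsum l 0) (bsum l 1) (bsum l 2)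
      (bsum_deriv l 0) (bsum_deriv l 1) a w hw ?_ ?_
    · intro t ht hp
      have := hq t ht
      rw [bsum_ode]
      nlinarith
    · intro t ht
      by_contra! hc
      obtain ⟨s, hs, hs0⟩ := hpre.intermediate_value ht ha hcont.continuousOn
        (show (0 : ℝ) ∈ Icc _ _ from ⟨hc, h0.le⟩)
      exact hne s hs hs0

theorem stmt_0 (α : ℝ) (hα : 1 < α) :
    ¬ BddAbove {x : ℝ | ∃ (ℓ : ℕ) (j : ℝ), IsPosBesselZero ℓ j ∧ x = j ^ 2 - α ^ 2 * ℓ ^ 2} ∧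
    ¬ BddBelow {x : ℝ | ∃ (ℓ : ℕ) (j : ℝ), IsPosBesselZero ℓ j ∧ x = j ^ 2 - α ^ 2 * ℓ ^ 2} := by
  constructor
  · rintro ⟨B, hB⟩
    obtain ⟨t, ht, hz⟩ := bessel_zero 0 (max B 0) 1 one_pos (by
      have := one_le_exp (le_max_right B 0)
      simp only [Nat.cast_zero]
      nlinarith)
    have h := hB ⟨0, _, hz, rfl⟩
    have h1 := add_one_le_exp t
    have h2 := ht.1
    have h3 := le_max_left B 0
    have h4 := le_max_right B 0
    simp only [Nat.cast_zero] at h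
    nlinarith
  · rintro ⟨B, hB⟩
    -- choose 1 < b < β < α
    obtain ⟨β, hβ1, hβ2⟩ := exists_between hα
    obtain ⟨b, hb1, hb2⟩ := exists_between hβ1
    set c := Real.sqrt (b ^ 2 - 1) with hc
    have hc2 : c ^ 2 = b ^ 2 - 1 := Real.sq_sqrt (by nlinarith)
    have hcpos : 0 < c := Real.sqrt_pos.2 (by nlinarith)
    have hlim : Tendsto (fun n : ℕ => b * Real.exp (π / c / (n : ℝ))) atTop (nhds (b * Real.exp 0)) :=
      ((Real.continuous_exp.tendsto 0).comp (tendsto_const_div_atTop_nhds_zero_nat (π / c))).const_mul b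
    rw [exp_zero, mul_one] at hlim
    have hev := hlim.eventually_lt_const hb2
    have hdel : 0 < α ^ 2 - β ^ 2 := by nlinarith
    obtain ⟨n, hn1, hn2, hn3⟩ := (hev.and ((eventually_ge_atTop 1).and
      (tendsto_natCast_atTop_atTop.eventually_gt_atTop (-B / (α ^ 2 - β ^ 2))))).exists
    have hn : (1 : ℝ) ≤ n := by exact_mod_cast hn2
    have hnp : (0 : ℝ) < n := by linarith
    have hbn : 0 < b * n := by positivity
    obtain ⟨t, ht, hz⟩ := bessel_zero n (Real.log (b * n)) (c * n) (by positivity) (by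
      rw [exp_log hbn]
      nlinarith)
    have h := hB ⟨n, _, hz, rfl⟩
    have h1 : Real.exp t ≤ β * n := by
      calc Real.exp t ≤ Real.exp (Real.log (b * n) + π / (c * n)) := exp_le_exp.2 ht.2
        _ = (b * Real.exp (π / c / n)) * n := by
          rw [exp_add, exp_log hbn, div_div]; ring
        _ ≤ β * n := by gcongr
    have h2 : Real.exp t ^ 2 ≤ (β * n) ^ 2 := by gcongr
    rw [div_lt_iff₀ hdel] at hn3
    have h4 : (n : ℝ) * (α ^ 2 - β ^ 2) ≤ n ^ 2 * (α ^ 2 - β ^ 2) := by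
      gcongr; nlinarith
    nlinarith
end

section
/- There exists a sequence (α_n) in (1, ∞) with α_n → ∞ such that for every n the following hold: (i) for every real Λ, the set of pairs (ℓ, j), with ℓ a nonnegative integer and j a positive zero of J_ℓ, satisfying j² − α_n²ℓ² = Λ is finite; (ii) there exists c_n > 0 such that for every nonnegative integer ℓ and every positive zero j of J_ℓ, either j² − α_n²ℓ² = 0 or |j² − α_n²ℓ²| ≥ c_n · j; (iii) the set { j² − α_n²ℓ² : ℓ a nonnegative integer, j a positive zero of J_ℓ } has no finite accumulation point in ℝ. -/
open Real Filter Set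

set_option maxHeartbeats 1000000

lemma A1 (m x k p q : ℝ) (hmx : m ≤ x) (hm : 0 ≤ m) (hpq : p ≤ q)
    (hne : ∀ θ ∈ Icc p q, m - x * cos θ ≠ 0) :
    (sin (m * q - x * sin q + k) / (m - x * cos q) +
      (1 - cos (m * q - x * sin q + k)) * (x * sin q) / (m - x * cos q) ^ 3) -
    (sin (m * p - x * sin p + k) / (m - x * cos p) +
      (1 - cos (m * p - x * sin p + k)) * (x * sin p) / (m - x * cos p) ^ 3)
     ≤ ∫ θ in p..q, cos (m * θ - x * sin θ + k) := by
  have hd : ∀ θ ∈ Icc p q, HasDerivAt (fun θ => sin (m * θ - x * sin θ + k) / (m - x * cos θ) +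
      (1 - cos (m * θ - x * sin θ + k)) * (x * sin θ) / (m - x * cos θ) ^ 3)
      (cos (m * θ - x * sin θ + k) - (1 - cos (m * θ - x * sin θ + k)) *
        (x * (x + 2 * x * sin θ ^ 2 - m * cos θ) / (m - x * cos θ) ^ 4)) θ := by
    intro θ hθ
    have h0 := hne θ hθ
    have h1 : HasDerivAt (fun θ => m * θ - x * sin θ + k) (m - x * cos θ) θ := by
      have := (((hasDerivAt_id θ).const_mul m).sub ((hasDerivAt_sin θ).const_mul x)).add_const k
      simpa using! this
    have h2 : HasDerivAt (fun θ => m - x * cos θ) (x * sin θ) θ := by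
      have := ((hasDerivAt_cos θ).const_mul x).const_sub m
      simpa using! this
    have h3 : HasDerivAt (fun θ => x * sin θ) (x * cos θ) θ := (hasDerivAt_sin θ).const_mul x
    have h4 := (h1.sin.div h2 h0).add
      (((h1.cos.const_sub 1).mul h3).div (h2.pow 3) (pow_ne_zero 3 h0))
    refine h4.congr_deriv ?_
    have hs : sin θ ^ 2 = 1 - cos θ ^ 2 := by rw [sin_sq]
    simp only [Pi.pow_apply, Pi.mul_apply]
    generalize hD : m - x * cos θ = D at *
    have hm' : m = D + x * cos θ := by linarith
    generalize cos (m * θ - x * sin θ + k) = C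
    generalize sin (m * θ - x * sin θ + k) = S
    subst hm'
    field_simp
    push_cast
    ring_nf
    simp only [hs]
    ring
  refine intervalIntegral.sub_le_integral_of_hasDeriv_right_of_le hpq
    (fun θ hθ => (hd θ hθ).continuousAt.continuousWithinAt)
    (fun θ hθ => (hd θ (Ioo_subset_Icc_self hθ)).hasDerivWithinAt) ?_ ?_
  · exact (Continuous.continuousOn (by fun_prop)).integrableOn_Icc
  · intro θ hθ
    have hx : 0 ≤ x := hm.trans hmx
    have h1 : m * cos θ ≤ x := by nlinarith [cos_le_one θ]
    have h2 : 0 ≤ 2 * x * sin θ ^ 2 := by positivity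
    have h3 : 0 ≤ x * (x + 2 * x * sin θ ^ 2 - m * cos θ) / (m - x * cos θ) ^ 4 := by
      apply div_nonneg (mul_nonneg hx (by linarith)) (by positivity)
    have h4 := cos_le_one (m * θ - x * sin θ + k)
    nlinarith [mul_nonneg (sub_nonneg.2 h4) h3]

lemma sub_sin_bound (t η : ℝ) (ht : |t| ≤ η) (hη : η ≤ 1) : |t - sin t| ≤ η ^ 3 / 4 := by
  have key : ∀ u : ℝ, 0 ≤ u → u ≤ η → |u - sin u| ≤ η ^ 3 / 4 := by
    intro u h0 h1
    rcases h0.eq_or_lt with h | h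
    · subst h; simp; positivity
    · have h2 := sin_gt_sub_cube h
      have h3 := sin_le h0
      have h5 : 0 < u ^ 3 := by positivity
      have : u ^ 3 ≤ η ^ 3 := by gcongr
      rw [abs_le]; constructor <;> nlinarith
  rcases le_total 0 t with h | h
  · exact key t h (by rwa [abs_of_nonneg h] at ht)
  · have := key (-t) (by linarith) (by rwa [abs_of_nonpos h] at ht)
    rw [sin_neg] at this
    rw [← abs_neg]; convert this using 2; ring

/-- numerical endpoint estimate -/
lemma A_end (A η S C D F : ℝ) (hA : 0 < A) (hη : 0 < η) (h : A * η ^ 2 = 1 / 2)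
    (hS : |S| ≤ 253 / 1000) (hC0 : C ≤ 1) (hC : 1 - (253 / 1000) ^ 2 / 2 ≤ C)
    (hD : 99 / 100 * (A * η) ≤ D) (hF0 : 0 ≤ F) (hF : F ≤ 101 / 100 * A) :
    |S / D + (1 - C) * F / D ^ 3| ≤ 7 / 10 * η := by
  have hAη : 0 < A * η := by positivity
  have hD0 : 0 < D := by nlinarith
  have h1 : |S / D| ≤ 512 / 1000 * η := by
    rw [abs_div, abs_of_pos hD0, div_le_iff₀ hD0]
    have : 512 / 1000 * η * (99 / 100 * (A * η)) ≤ 512 / 1000 * η * D := by gcongr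
    nlinarith
  have h2 : |(1 - C) * F / D ^ 3| ≤ 135 / 1000 * η := by
    rw [abs_of_nonneg (by have := sub_nonneg.2 hC0; positivity), div_le_iff₀ (by positivity)]
    have e1 : (99 / 100 * (A * η)) ^ 3 ≤ D ^ 3 := by gcongr
    have e2 : (1 - C) * F ≤ ((253 / 1000) ^ 2 / 2) * (101 / 100 * A) := by
      apply mul_le_mul (by linarith) hF hF0 (by norm_num)
    have e3 : 135 / 1000 * η * (99 / 100 * (A * η)) ^ 3 ≤ 135 / 1000 * η * D ^ 3 := by gcongr
    have e4 : 135 / 1000 * η * (99 / 100 * (A * η)) ^ 3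
       = 135 / 1000 * (99 / 100) ^ 3 * A * (A * η ^ 2) ^ 2 := by ring
    rw [h] at e4
    nlinarith
  exact (abs_add_le _ _).trans (by linarith)

lemma A2 (m x k β η : ℝ) (hβ : 0 < β) (hβ2 : β < π / 2) (hη : 0 < η) (hηβ : η < β)
    (hη1 : η ≤ 1 / 100) (hm : 0 ≤ m) (hmx : m ≤ x)
    (hc : |m * β - x * sin β + k| ≤ 1 / 1000) (hc' : |m - x * cos β| ≤ 1 / 1000)
    (hA : x * sin β * η ^ 2 = 1 / 2) (hB : x * cos β * η ≤ x * sin β / 100)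
    (hk0 : sin k = 0) (hk1 : sin (m * π + k) = 0) :
    0 < ∫ θ in (0:ℝ)..π, cos (m * θ - x * sin θ + k) := by
  have hx : 0 ≤ x := hm.trans hmx
  have hpi := pi_gt_three
  obtain ⟨A, hAdef⟩ : ∃ A, A = x * sin β := ⟨_, rfl⟩
  obtain ⟨B, hBdef⟩ : ∃ B, B = x * cos β := ⟨_, rfl⟩
  have hB0 : 0 ≤ B := by
    rw [hBdef]; exact mul_nonneg hx (cos_nonneg_of_neg_pi_div_two_le_of_le (by linarith) hβ2.le)
  rw [← hAdef] at hc hA hB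
  rw [← hBdef] at hc' hB
  have hA0 : 0 < A := by
    by_contra hh
    have : A * η ^ 2 ≤ 0 := mul_nonpos_of_nonpos_of_nonneg (by linarith) (by positivity)
    linarith
  have hAη : 0 < A * η := by positivity
  have hη3 : B * η ^ 3 ≤ 1 / 200 := by
    have : B * η * η ^ 2 ≤ A / 100 * η ^ 2 := by gcongr
    nlinarith
  -- formulas
  have f0 : ∀ t, m * (β + t) - x * sin (β + t) + k =
      (m * β - A + k) + (m - B) * t + A * (1 - cos t) + B * (t - sin t) := by
    intro t; rw [sin_add, hAdef, hBdef]; ring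
  have f1 : ∀ t, m - x * cos (β + t) = (m - B) + B * (1 - cos t) + A * sin t := by
    intro t; rw [cos_add, hAdef, hBdef]; ring
  have f2 : ∀ t, x * sin (β + t) = A * cos t + B * sin t := by
    intro t; rw [sin_add, hAdef, hBdef]; ring
  have b0 : ∀ t, |t| ≤ η → |m * (β + t) - x * sin (β + t) + k| ≤ 253 / 1000 := by
    intro t ht
    rw [f0]
    have e1 : |(m - B) * t| ≤ 1 / 1000 * η := by rw [abs_mul]; gcongr
    have e2 : |A * (1 - cos t)| ≤ 1 / 4 := by
      have := one_sub_sq_div_two_le_cos (x := t)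
      have h2 : t ^ 2 ≤ η ^ 2 := by rw [← sq_abs t]; gcongr
      rw [abs_of_nonneg (mul_nonneg hA0.le (by linarith [cos_le_one t]))]
      nlinarith
    have e3 : |B * (t - sin t)| ≤ 1 / 800 := by
      rw [abs_mul, abs_of_nonneg hB0]
      have := mul_le_mul_of_nonneg_left (sub_sin_bound t η ht (by linarith)) hB0
      linarith
    have := abs_add_three (m * β - A + k + (m - B) * t) (A * (1 - cos t)) (B * (t - sin t))
    have := abs_add_le (m * β - A + k) ((m - B) * t)
    linarith
  have bc : ∀ t, |t| ≤ η → 1 - (253 / 1000) ^ 2 / 2 ≤ cos (m * (β + t) - x * sin (β + t) + k) := by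
    intro t ht
    have h1 := b0 t ht
    have h2 := one_sub_sq_div_two_le_cos (x := m * (β + t) - x * sin (β + t) + k)
    have h3 : (m * (β + t) - x * sin (β + t) + k) ^ 2 ≤ (253 / 1000) ^ 2 := by
      rw [← sq_abs]; gcongr
    linarith
  have bs : ∀ t, |t| ≤ η → |sin (m * (β + t) - x * sin (β + t) + k)| ≤ 253 / 1000 := by
    intro t ht
    exact (abs_sin_le_abs).trans (b0 t ht)
  have hsinη : η - η ^ 3 / 4 < sin η := by
    have := sin_gt_sub_cube hη
    have : 0 < η ^ 3 := by positivity
    linarith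
  have hcosη : 1 - η ^ 2 / 2 ≤ cos η := one_sub_sq_div_two_le_cos
  have hcosη1 := cos_le_one η
  have hsinη1 := sin_le hη.le
  have hsinη0 : 0 < sin η := by nlinarith [mul_pos hη hη]
  have hc1 : 1 / 1000 ≤ 1 / 1000 * (2 * (A * η) * η) := by nlinarith
  have hc2 : 1 / 1000 * (2 * (A * η) * η) ≤ 1 / 10000 * (A * η) := by nlinarith
  have hAs : 9999 / 10000 * (A * η) ≤ A * sin η := by
    have : A * η * (1 - η ^ 2 / 4) ≤ A * sin η := by nlinarith
    have : A * η * (η ^ 2 / 4) ≤ A * η * (1 / 10000) := by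
      refine mul_le_mul_of_nonneg_left ?_ hAη.le
      nlinarith
    linarith
  have hBc : B * (1 - cos η) ≤ 1 / 200 * (A * η) := by
    have : B * (1 - cos η) ≤ B * (η ^ 2 / 2) := by gcongr; linarith
    nlinarith
  have hBc0 : 0 ≤ B * (1 - cos η) := mul_nonneg hB0 (by linarith)
  rw [abs_le] at hc'
  have d1 : 99 / 100 * (A * η) ≤ m - x * cos (β + η) := by
    rw [f1]; linarith
  have d2 : m - x * cos (β + -η) ≤ -(99 / 100 * (A * η)) := by
    rw [f1, cos_neg, sin_neg]; linarith
  have hBs : B * sin η ≤ A / 100 := (mul_le_mul_of_nonneg_left hsinη1 hB0).trans hB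
  have hBs0 : 0 ≤ B * sin η := by positivity
  have hcη0 : 0 ≤ cos η := by nlinarith
  have hAc : A * (1 / 2) ≤ A * cos η := mul_le_mul_of_nonneg_left (by nlinarith) hA0.le
  have hAc1 : A * cos η ≤ A * 1 := mul_le_mul_of_nonneg_left hcosη1 hA0.le
  have e1 : 0 ≤ x * sin (β + η) ∧ x * sin (β + η) ≤ 101 / 100 * A := by
    rw [f2]; constructor <;> linarith
  have e2 : 0 ≤ x * sin (β + -η) ∧ x * sin (β + -η) ≤ 101 / 100 * A := by
    rw [f2, cos_neg, sin_neg]; constructor <;> linarith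
  have aη : |η| ≤ η := (abs_of_pos hη).le
  have aη' : |-η| ≤ η := by rw [abs_neg]; exact aη
  have g1 := A_end A η _ _ _ _ hA0 hη hA (bs η aη) (cos_le_one _) (bc η aη) d1 e1.1 e1.2
  have g2 := A_end A η (sin (m * (β + -η) - x * sin (β + -η) + k)) _ (-(m - x * cos (β + -η))) _
    hA0 hη hA (bs _ aη') (cos_le_one _) (bc _ aη') (by linarith) e2.1 e2.2
  -- integrals
  have i1 := A1 m x k (β + η) π hmx hm (by linarith) (by
    intro θ hθ
    have : cos θ ≤ cos (β + η) := cos_le_cos_of_nonneg_of_le_pi (by linarith) hθ.2 hθ.1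
    have : x * cos θ ≤ x * cos (β + η) := by gcongr
    exact ne_of_gt (by linarith))
  have i2 := A1 m x k 0 (β + -η) hmx hm (by linarith) (by
    intro θ hθ
    have : cos (β + -η) ≤ cos θ := cos_le_cos_of_nonneg_of_le_pi hθ.1 (by linarith) hθ.2
    have : x * cos (β + -η) ≤ x * cos θ := by gcongr
    exact ne_of_lt (by linarith))
  have i3 : 2 * η * (1 - (253 / 1000) ^ 2 / 2) ≤
      ∫ θ in (β + -η)..(β + η), cos (m * θ - x * sin θ + k) := by
    have := intervalIntegral.integral_mono_on (a := β + -η) (b := β + η)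
      (f := fun _ => 1 - (253 / 1000) ^ 2 / 2) (g := fun θ => cos (m * θ - x * sin θ + k))
      (μ := MeasureTheory.volume)
      (by linarith) (by simp) (Continuous.intervalIntegrable (by fun_prop) _ _) (by
        intro θ hθ
        have := bc (θ - β) (by rw [abs_le]; constructor <;> linarith [hθ.1, hθ.2])
        simpa using this)
    rw [intervalIntegral.integral_const, smul_eq_mul] at this
    linarith
  have ii : ∀ p q, IntervalIntegrable (fun θ => cos (m * θ - x * sin θ + k))
      MeasureTheory.volume p q := fun p q => Continuous.intervalIntegrable (by fun_prop) _ _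
  rw [← intervalIntegral.integral_add_adjacent_intervals (ii 0 (β + -η)) (ii _ π),
    ← intervalIntegral.integral_add_adjacent_intervals (ii (β + -η) (β + η)) (ii _ π)]
  simp only [sin_pi, mul_zero, sub_zero, hk1, zero_div, zero_add, sin_zero, hk0] at i1 i2
  rw [abs_le] at g1 g2
  have g3 := g2.2
  rw [div_neg, Odd.neg_pow (by decide), div_neg] at g3
  linarith [g1.2]

lemma A3 (a : ℝ) (ha : 0 < a) (n : ℕ) (h : a - arctan a = n * π) :
    ∃ L : ℕ, ∀ ℓ : ℕ, L ≤ ℓ → ∀ x : ℝ, |x - √(1 + a ^ 2) * ℓ| ≤ 1 / 1000 →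
      ∫ θ in (0:ℝ)..π, cos (ℓ * θ - x * sin θ) ≠ 0 := by
  obtain ⟨β, hβ⟩ : ∃ β, β = arctan a := ⟨_, rfl⟩
  obtain ⟨α, hα⟩ : ∃ α, α = √(1 + a ^ 2) := ⟨_, rfl⟩
  have hα1 : 1 < α := by rw [hα]; apply lt_sqrt_of_sq_lt; nlinarith
  have hcos : cos β = 1 / α := by rw [hβ, cos_arctan, hα]
  have hsin : sin β = a / α := by rw [hβ, sin_arctan, hα]
  have hβ0 : 0 < β := by rw [hβ]; exact arctan_pos.2 ha
  have hβ2 : β < π / 2 := by rw [hβ]; exact arctan_lt_pi_div_two a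
  have hs0 : 0 < sin β := by rw [hsin]; positivity
  -- eta0
  obtain ⟨η0, hη0⟩ : ∃ η0, η0 = min (min (1 / 100) (β / 2)) (a / 100) := ⟨_, rfl⟩
  have hη0p : 0 < η0 := by rw [hη0]; positivity
  obtain ⟨L1, hL1⟩ := exists_nat_ge ((1 / (2 * η0 ^ 2) + 1) / a)
  obtain ⟨L2, hL2⟩ := exists_nat_ge (1 / (α - 1))
  refine ⟨max L1 L2, fun ℓ hℓ x hx => ?_⟩
  rw [← hα] at hx
  have hℓ1 : (1 / (2 * η0 ^ 2) + 1) ≤ a * ℓ := by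
    have : (L1 : ℝ) ≤ ℓ := by exact_mod_cast (le_max_left _ _).trans hℓ
    rw [div_le_iff₀ ha] at hL1
    nlinarith
  have hℓ2 : 1 ≤ (α - 1) * ℓ := by
    have : (L2 : ℝ) ≤ ℓ := by exact_mod_cast (le_max_right _ _).trans hℓ
    rw [div_le_iff₀ (by linarith)] at hL2
    nlinarith
  obtain ⟨s, hs⟩ : ∃ s, s = x - α * ℓ := ⟨_, rfl⟩
  rw [← hs] at hx
  have hxs : x = α * ℓ + s := by linarith
  have hx' := abs_le.1 hx
  have hℓ0 : (0:ℝ) ≤ ℓ := by positivity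
  have hA : x * sin β = a * ℓ + s * sin β := by
    rw [hxs, hsin]; field_simp
  have hB : x * cos β = ℓ + s * cos β := by
    rw [hxs, hcos]; field_simp
  have hA1 : 1 / (2 * η0 ^ 2) ≤ x * sin β := by
    rw [hA]; nlinarith [sin_le_one β]
  have hA0 : 0 < x * sin β := lt_of_lt_of_le (by positivity) hA1
  obtain ⟨η, hη⟩ : ∃ η, η = 1 / √(2 * (x * sin β)) := ⟨_, rfl⟩
  have hηp : 0 < η := by rw [hη]; positivity
  have hηsq : η ^ 2 = 1 / (2 * (x * sin β)) := by
    rw [hη, div_pow, sq_sqrt (by positivity)]; simp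
  have hηle : η ≤ η0 := by
    rw [← abs_of_pos hηp, ← abs_of_pos hη0p, ← sq_le_sq, hηsq, div_le_iff₀ (by positivity)]
    rw [div_le_iff₀ (by positivity)] at hA1
    linarith
  have l1 : η0 ≤ 1 / 100 := by rw [hη0]; exact (min_le_left _ _).trans (min_le_left _ _)
  have l2 : η0 ≤ β / 2 := by rw [hη0]; exact (min_le_left _ _).trans (min_le_right _ _)
  have l3 : η0 ≤ a / 100 := by rw [hη0]; exact (min_le_right _ _)
  have key := A2 ℓ x ((n * ℓ : ℕ) * π) β η hβ0 hβ2 hηp (by linarith) (by linarith) hℓ0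
    (by rw [hxs]; linarith) (by
      rw [hA]
      have : (ℓ:ℝ) * β - (a * ℓ + s * sin β) + (n * ℓ : ℕ) * π = -(s * sin β) := by
        push_cast
        have : a - β = n * π := by rw [hβ]; exact h
        linear_combination (-(ℓ:ℝ)) * this
      rw [this, abs_neg, abs_mul]
      calc |s| * |sin β| ≤ 1 / 1000 * 1 := by
            gcongr; exact abs_sin_le_one β
        _ = _ := by ring) (by
      rw [hB]
      have : (ℓ:ℝ) - (ℓ + s * cos β) = -(s * cos β) := by ring
      rw [this, abs_neg, abs_mul]
      calc |s| * |cos β| ≤ 1 / 1000 * 1 := by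
            gcongr; exact abs_cos_le_one β
        _ = _ := by ring) (by rw [hηsq, mul_one_div, div_eq_div_iff (by positivity) (by norm_num)]; ring) (by
      have e : x * sin β = a * (x * cos β) := by rw [hsin, hcos]; ring
      have : 0 < x * cos β := by
        rw [e] at hA0; exact pos_of_mul_pos_right hA0 ha.le
      rw [e]; nlinarith) (sin_nat_mul_pi _) (by
      rw [← add_mul]; exact_mod_cast sin_nat_mul_pi (ℓ + n * ℓ))
  simp only [cos_add_nat_mul_pi, intervalIntegral.integral_const_mul] at key
  intro h0
  rw [h0] at key
  simp at key

lemma besselJ_nat (ℓ : ℕ) (x : ℝ) : besselJ ℓ x =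
    ∑' m : ℕ, (-1 : ℝ) ^ m / (m.factorial * (m + ℓ).factorial) * (x / 2) ^ (2 * m + ℓ) := by
  unfold besselJ
  congr 1; ext m
  have h1 : Real.Gamma ((m:ℝ) + ℓ + 1) = (m + ℓ).factorial := by
    rw [← Real.Gamma_nat_eq_factorial]; push_cast; rfl
  have h2 : (2 * (m:ℝ) + ℓ) = ((2 * m + ℓ : ℕ) : ℝ) := by push_cast; rfl
  rw [h1, h2, rpow_natCast]

lemma int_exp (k : ℤ) : ∫ θ in (0:ℝ)..(2 * π), Complex.exp (k * Complex.I * θ) =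
    if k = 0 then 2 * π else 0 := by
  split_ifs with h
  · subst h; simp
  · have hk : (k:ℂ) * Complex.I ≠ 0 := by simp [h]
    rw [integral_exp_mul_complex hk]
    have : Complex.exp (k * Complex.I * ((2 * π : ℝ) : ℂ)) = 1 := by
      rw [Complex.exp_eq_one_iff]; exact ⟨k, by push_cast; ring⟩
    rw [this]; simp

lemma bessel_hasSum (ℓ : ℕ) (x : ℝ) :
    HasSum (fun q : ℕ => (2 * π : ℂ) *
      (((-1) ^ q / (q.factorial * (q + ℓ).factorial) * (x / 2) ^ (2 * q + ℓ) : ℝ) : ℂ))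
    (∫ θ in (0:ℝ)..(2 * π), Complex.exp ((x * sin θ - ℓ * θ : ℝ) * Complex.I)) := by
  obtain ⟨w, hw⟩ : ∃ w : ℂ, w = ((x / 2 : ℝ) : ℂ) := ⟨_, rfl⟩
  have hexp : ∀ z : ℂ, HasSum (fun n : ℕ => z ^ n / n.factorial) (Complex.exp z) := by
    intro z; rw [Complex.exp_eq_exp_ℂ]; exact NormedSpace.expSeries_div_hasSum_exp z
  have hsum : ∀ r : ℝ, 0 ≤ r → Summable (fun p : ℕ × ℕ => (r ^ p.1 / p.1.factorial) * (r ^ p.2 / p.2.factorial)) := by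
    intro r hr
    exact (Real.summable_pow_div_factorial r).mul_of_nonneg (Real.summable_pow_div_factorial r)
      (fun n => by positivity) (fun n => by positivity)
  have main := intervalIntegral.hasSum_integral_of_dominated_convergence
    (μ := MeasureTheory.volume) (a := 0) (b := 2 * π)
    (F := fun (p : ℕ × ℕ) (θ : ℝ) => (w ^ p.1 / p.1.factorial * ((-w) ^ p.2 / p.2.factorial)) *
      Complex.exp (((p.1 - p.2 - ℓ : ℤ) : ℂ) * Complex.I * θ))
    (f := fun θ : ℝ => Complex.exp ((x * sin θ - ℓ * θ : ℝ) * Complex.I))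
    (fun p _ => (‖w‖ ^ p.1 / p.1.factorial) * (‖w‖ ^ p.2 / p.2.factorial))
    (fun p => Continuous.aestronglyMeasurable (by fun_prop))
    (fun p => Eventually.of_forall fun θ _ => by
      have : ‖Complex.exp (((p.1 - p.2 - ℓ : ℤ) : ℂ) * Complex.I * θ)‖ = 1 := by
        rw [Complex.norm_exp]; simp
      rw [norm_mul, this]; simp)
    (Eventually.of_forall fun θ _ => hsum _ (norm_nonneg _))
    (by simp)
    (Eventually.of_forall fun θ _ => by
      have h1 := hexp (w * Complex.exp (θ * Complex.I))
      have h2 := hexp (-w * Complex.exp (-(θ * Complex.I)))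
      have hs : Summable (fun p : ℕ × ℕ => ((w * Complex.exp (θ * Complex.I)) ^ p.1 / p.1.factorial) *
          ((-w * Complex.exp (-(θ * Complex.I))) ^ p.2 / p.2.factorial)) := by
        refine Summable.of_norm_bounded (hsum ‖w‖ (norm_nonneg _)) (fun p => le_of_eq ?_)
        have e1 : ‖Complex.exp (θ * Complex.I)‖ = 1 := Complex.norm_exp_ofReal_mul_I θ
        have e2 : ‖Complex.exp (-(θ * Complex.I))‖ = 1 := by
          rw [Complex.exp_neg, norm_inv, e1, inv_one]
        simp [norm_mul, norm_pow, e1, e2]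
      have h3 := (h1.mul h2 hs).mul_right (Complex.exp (-(ℓ * θ * Complex.I)))
      have e : Complex.exp (w * Complex.exp (θ * Complex.I)) *
          Complex.exp (-w * Complex.exp (-(θ * Complex.I))) * Complex.exp (-(ℓ * θ * Complex.I))
          = Complex.exp ((x * sin θ - ℓ * θ : ℝ) * Complex.I) := by
        rw [← Complex.exp_add, ← Complex.exp_add]
        congr 1
        have : -(θ * Complex.I) = (-θ : ℂ) * Complex.I := by ring
        rw [this, Complex.exp_mul_I, Complex.exp_mul_I, Complex.cos_neg, Complex.sin_neg, hw]
        push_cast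
        ring
      rw [e] at h3
      refine h3.congr_fun ?_
      intro p
      have : Complex.exp (((p.1 - p.2 - ℓ : ℤ) : ℂ) * Complex.I * θ) =
        Complex.exp (θ * Complex.I) ^ p.1 * Complex.exp (-(θ * Complex.I)) ^ p.2 *
          Complex.exp (-(ℓ * θ * Complex.I)) := by
        rw [← Complex.exp_nat_mul, ← Complex.exp_nat_mul, ← Complex.exp_add, ← Complex.exp_add]
        congr 1; push_cast; ring
      rw [this, mul_pow, mul_pow]; ring)
  simp only [intervalIntegral.integral_const_mul, int_exp] at main
  have hinj : Function.Injective (fun q : ℕ => (q + ℓ, q)) := fun a b h => by simpa using (Prod.ext_iff.1 h).2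
  rw [← hinj.hasSum_iff] at main
  · refine main.congr_fun ?_
    intro q
    simp only [Function.comp]
    rw [if_pos (by push_cast; ring), hw, neg_pow ((x / 2 : ℝ) : ℂ)]
    push_cast
    ring
  · rintro ⟨p, q⟩ hp
    rw [if_neg, Complex.ofReal_zero, mul_zero]
    intro h
    apply hp
    refine ⟨q, ?_⟩
    simp only [Prod.mk.injEq, and_true]
    simp only at h
    omega

lemma bessel_integral (ℓ : ℕ) (x : ℝ) :
    π * besselJ ℓ x = ∫ θ in (0:ℝ)..π, cos (ℓ * θ - x * sin θ) := by
  have h := (bessel_hasSum ℓ x)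
  have h1 := Complex.hasSum_re h
  have hi : ∀ p q : ℝ, IntervalIntegrable (fun θ : ℝ => cos (ℓ * θ - x * sin θ))
    MeasureTheory.volume p q := fun p q => Continuous.intervalIntegrable (by fun_prop) _ _
  have e1 : (∫ θ in (0:ℝ)..(2 * π), Complex.exp ((x * sin θ - ℓ * θ : ℝ) * Complex.I)).re
     = ∫ θ in (0:ℝ)..(2 * π), cos (ℓ * θ - x * sin θ) := by
    have hint : IntervalIntegrable (fun θ : ℝ => Complex.exp ((x * sin θ - ℓ * θ : ℝ) * Complex.I))
      MeasureTheory.volume 0 (2 * π) := Continuous.intervalIntegrable (by fun_prop) _ _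
    have := Complex.reCLM.intervalIntegral_comp_comm hint
    simp only [Complex.reCLM_apply] at this
    rw [← this]
    congr 1; ext θ
    rw [Complex.exp_ofReal_mul_I_re, ← cos_neg]; congr 1; ring
  have e2 : ∫ θ in (0:ℝ)..(2 * π), cos (ℓ * θ - x * sin θ) =
      2 * ∫ θ in (0:ℝ)..π, cos (ℓ * θ - x * sin θ) := by
    rw [← intervalIntegral.integral_add_adjacent_intervals (hi 0 π) (hi π _)]
    have := intervalIntegral.integral_comp_sub_left (a := 0) (b := π)
      (fun θ : ℝ => cos (ℓ * θ - x * sin θ)) (2 * π)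
    have e3 : 2 * π - π = π := by ring
    rw [e3, sub_zero] at this
    rw [← this, two_mul (∫ θ in (0:ℝ)..π, cos (ℓ * θ - x * sin θ))]
    congr 1
    apply intervalIntegral.integral_congr
    intro θ _
    simp only
    rw [sin_two_pi_sub]
    have : (ℓ:ℝ) * (2 * π - θ) - x * -sin θ = ℓ * (2 * π) - (ℓ * θ - x * sin θ) := by ring
    rw [this, cos_nat_mul_two_pi_sub]
  rw [e1, e2] at h1
  have h2 : HasSum (fun q : ℕ => 2 * π *
      ((-1) ^ q / (q.factorial * (q + ℓ).factorial) * (x / 2) ^ (2 * q + ℓ) : ℝ))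
      (2 * ∫ θ in (0:ℝ)..π, cos (ℓ * θ - x * sin θ)) := by
    refine h1.congr_fun ?_
    intro q
    have : (2 * π : ℂ) = ((2 * π : ℝ) : ℂ) := by push_cast; rfl
    rw [this, ← Complex.ofReal_mul, Complex.ofReal_re]
  have h3 := h2.tsum_eq
  rw [tsum_mul_left, ← besselJ_nat] at h3
  linarith

lemma zeros_finite (ℓ : ℕ) (R : ℝ) : {j : ℝ | IsPosBesselZero ℓ j ∧ j ≤ R}.Finite := by
  obtain ⟨E, hE⟩ : ∃ E : ℂ → ℂ, E = fun z => ∑' m : ℕ,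
    (-1 : ℂ) ^ m / (m.factorial * (m + ℓ).factorial) * (z / 2) ^ (2 * m) := ⟨_, rfl⟩
  have hball : ∀ r : ℝ, DifferentiableOn ℂ E (Metric.ball 0 r) := by
    intro r
    rw [hE]
    refine Complex.differentiableOn_tsum_of_summable_norm
      (Real.summable_pow_div_factorial ((r / 2) ^ 2)) (fun i => ?_) Metric.isOpen_ball ?_
    · fun_prop
    · intro i z hz
      have hz' : ‖z‖ < r := by simpa using hz
      simp only [norm_mul, norm_div, norm_pow, norm_neg, norm_one, one_pow, Complex.norm_natCast, Complex.norm_ofNat]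
      rw [← pow_mul, div_mul_eq_mul_div, one_mul]
      have h1 : (1:ℝ) ≤ (i + ℓ).factorial := by exact_mod_cast Nat.one_le_iff_ne_zero.2 (Nat.factorial_ne_zero _)
      have h0 : (0:ℝ) < i.factorial := by exact_mod_cast Nat.factorial_pos i
      have hr : (0:ℝ) ≤ (r / 2) ^ (2 * i) := by rw [pow_mul]; positivity
      calc (‖z‖ / 2) ^ (2 * i) / (i.factorial * (i + ℓ).factorial)
          ≤ (r / 2) ^ (2 * i) / (i.factorial * 1) := by gcongr
        _ = _ := by rw [mul_one]
  have hdiff : Differentiable ℂ E := by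
    intro z
    exact (hball (‖z‖ + 1)).differentiableAt (Metric.isOpen_ball.mem_nhds (by simp))
  have hE0 : E 0 ≠ 0 := by
    rw [hE]
    simp only [zero_div]
    rw [tsum_eq_single 0]
    · simp [Nat.factorial_ne_zero]
    · intro m hm
      rw [zero_pow (by omega), mul_zero]
  have hfin : ({z : ℂ | E z = 0} ∩ Metric.closedBall 0 R).Finite := by
    by_contra hinf
    obtain ⟨z, -, hz⟩ := Set.Infinite.exists_accPt_of_subset_isCompact hinf
      (isCompact_closedBall 0 R) inter_subset_right
    rw [accPt_iff_frequently_nhdsNE] at hz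
    have han : AnalyticOnNhd ℂ E univ := hdiff.differentiableOn.analyticOnNhd isOpen_univ
    have := han.eqOn_zero_of_preconnected_of_frequently_eq_zero isPreconnected_univ (mem_univ z)
      (hz.mono fun y hy => hy.1)
    exact hE0 (this (mem_univ 0))
  refine Set.Finite.of_finite_image (f := fun j : ℝ => (j : ℂ)) (hfin.subset ?_)
    (Complex.ofReal_injective.injOn)
  rintro _ ⟨j, ⟨⟨hj0, hj⟩, hjR⟩, rfl⟩
  refine ⟨?_, ?_⟩
  · rw [besselJ_nat] at hj
    have h1 : ((∑' m : ℕ, (-1 : ℝ) ^ m / (m.factorial * (m + ℓ).factorial) * (j / 2) ^ (2 * m + ℓ) : ℝ) : ℂ)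
      = E j * (j / 2) ^ ℓ := by
      rw [hE, Complex.ofReal_tsum, ← tsum_mul_right]
      congr 1; ext m
      push_cast
      ring
    rw [hj, Complex.ofReal_zero, eq_comm, mul_eq_zero] at h1
    rcases h1 with h1 | h1
    · exact h1
    · exfalso
      have : (j / 2 : ℂ) ≠ 0 := by
        simp [hj0.ne']
      exact pow_ne_zero _ this h1
  · simp only [Metric.mem_closedBall, dist_zero_right, Complex.norm_real, norm_eq_abs, abs_of_pos hj0]
    exact hjR

lemma D0 (N : ℕ) (R : ℝ) : {p : ℕ × ℝ | IsPosBesselZero p.1 p.2 ∧ p.1 ≤ N ∧ p.2 ≤ R}.Finite := by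
  have : (⋃ ℓ ∈ Finset.range (N + 1), (fun j : ℝ => (ℓ, j)) '' {j : ℝ | IsPosBesselZero ℓ j ∧ j ≤ R}).Finite :=
    Set.Finite.biUnion (Finset.finite_toSet _) (fun ℓ _ => (zeros_finite ℓ R).image _)
  refine this.subset ?_
  rintro ⟨ℓ, j⟩ ⟨h1, h2, h3⟩
  simp only [mem_iUnion]
  exact ⟨ℓ, Finset.mem_range.2 (Nat.lt_succ_of_le h2), j, ⟨h1, h3⟩, rfl⟩

lemma D1 (α : ℝ) (hα : 1 < α) (L : ℕ)
    (H : ∀ ℓ : ℕ, L ≤ ℓ → ∀ j : ℝ, IsPosBesselZero ℓ j → 1 / 1000 ≤ |j - α * ℓ|) (M : ℝ) :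
    {p : ℕ × ℝ | IsPosBesselZero p.1 p.2 ∧ |p.2 ^ 2 - α ^ 2 * (p.1 : ℝ) ^ 2| ≤ M}.Finite := by
  obtain ⟨N, hN⟩ := exists_nat_ge (1000 * M)
  refine (D0 (max L N) (max (1000 * M) (M + α ^ 2 * L ^ 2 + 1))).subset ?_
  rintro ⟨ℓ, j⟩ ⟨h1, h2⟩
  simp only at h1 h2
  have hj := h1.1
  rcases le_total L ℓ with h | h
  · have h3 := H ℓ h j h1
    have e : j ^ 2 - α ^ 2 * (ℓ:ℝ) ^ 2 = (j - α * ℓ) * (j + α * ℓ) := by ring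
    have hp : 0 ≤ j + α * ℓ := by positivity
    rw [e, abs_mul, abs_of_nonneg hp] at h2
    have h4 : j + α * ℓ ≤ 1000 * M := by nlinarith
    have hl : (ℓ:ℝ) ≤ α * ℓ := le_mul_of_one_le_left (by positivity) hα.le
    refine ⟨h1, ?_, ?_⟩
    · have : (ℓ:ℝ) ≤ N := by linarith
      exact (Nat.cast_le.1 this).trans (le_max_right _ _)
    · have : 0 ≤ α * ℓ := by positivity
      exact le_trans (by linarith : j ≤ 1000 * M) (le_max_left _ _)
  · refine ⟨h1, h.trans (le_max_left _ _), le_trans ?_ (le_max_right _ _)⟩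
    have h3 := (abs_le.1 h2).2
    have : α ^ 2 * (ℓ:ℝ) ^ 2 ≤ α ^ 2 * L ^ 2 := by gcongr
    show j ≤ _
    nlinarith [sq_nonneg (j - 1)]

lemma D2 (α : ℝ) (hα : 1 < α) (L : ℕ)
    (H : ∀ ℓ : ℕ, L ≤ ℓ → ∀ j : ℝ, IsPosBesselZero ℓ j → 1 / 1000 ≤ |j - α * ℓ|) :
    ∃ c : ℝ, 0 < c ∧ ∀ (ℓ : ℕ) (j : ℝ), IsPosBesselZero ℓ j →
          j ^ 2 - α ^ 2 * (ℓ : ℝ) ^ 2 = 0 ∨ |j ^ 2 - α ^ 2 * (ℓ : ℝ) ^ 2| ≥ c * j := by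
  obtain ⟨F, hF⟩ : ∃ F : Set (ℕ × ℝ), F = {p : ℕ × ℝ | (IsPosBesselZero p.1 p.2 ∧ p.1 ≤ L ∧
    p.2 ≤ α ^ 2 * L ^ 2 + 1) ∧ p.2 ^ 2 - α ^ 2 * (p.1 : ℝ) ^ 2 ≠ 0} := ⟨_, rfl⟩
  have hFf : F.Finite := by
    rw [hF]; exact (D0 L (α ^ 2 * L ^ 2 + 1)).subset fun p hp => hp.1
  have hc : ∃ c : ℝ, 0 < c ∧ ∀ p ∈ F, c ≤ |p.2 ^ 2 - α ^ 2 * (p.1 : ℝ) ^ 2| / p.2 := by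
    rcases F.eq_empty_or_nonempty with h | h
    · exact ⟨1, one_pos, by simp [h]⟩
    · obtain ⟨p, hp, hmin⟩ := Set.exists_min_image F
        (fun p => |p.2 ^ 2 - α ^ 2 * (p.1 : ℝ) ^ 2| / p.2) hFf h
      refine ⟨_, ?_, hmin⟩
      rw [hF] at hp
      exact div_pos (abs_pos.2 hp.2) hp.1.1.1
  obtain ⟨c, hc0, hc⟩ := hc
  refine ⟨min c (1 / 1000), by positivity, fun ℓ j hj => ?_⟩
  have hj0 := hj.1
  have hm1 : min c (1 / 1000) * j ≤ c * j := mul_le_mul_of_nonneg_right (min_le_left _ _) hj0.le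
  have hm2 : min c (1 / 1000) * j ≤ 1 / 1000 * j :=
    mul_le_mul_of_nonneg_right (min_le_right _ _) hj0.le
  by_cases hv : j ^ 2 - α ^ 2 * (ℓ : ℝ) ^ 2 = 0
  · exact Or.inl hv
  right
  rcases le_total L ℓ with h | h
  · have h3 := H ℓ h j hj
    have e : j ^ 2 - α ^ 2 * (ℓ:ℝ) ^ 2 = (j - α * ℓ) * (j + α * ℓ) := by ring
    have hl : 0 ≤ α * ℓ := by positivity
    have hp : 0 ≤ j + α * ℓ := by positivity
    rw [e, abs_mul, abs_of_nonneg hp]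
    nlinarith
  · by_cases hR : j ≤ α ^ 2 * L ^ 2 + 1
    · have := hc (ℓ, j) (by rw [hF]; exact ⟨⟨hj, h, hR⟩, hv⟩)
      rw [le_div_iff₀ hj0] at this
      exact hm1.trans this
    · push Not at hR
      have : α ^ 2 * (ℓ:ℝ) ^ 2 ≤ α ^ 2 * L ^ 2 := by gcongr
      have h0 : 0 ≤ α ^ 2 * (L:ℝ) ^ 2 := by positivity
      refine le_trans ?_ (le_abs_self _)
      nlinarith

lemma exists_a (n : ℕ) : ∃ a : ℝ, 0 < a ∧ (n:ℝ) + 1 ≤ a ∧ a - arctan a = (n + 1 : ℕ) * π := by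
  have hcont : ContinuousOn (fun a : ℝ => a - arctan a) (Icc 0 ((n + 1 : ℕ) * π + 2)) := by
    fun_prop
  have hpi := pi_gt_three
  have hpi4 := pi_lt_four
  have hp : (0:ℝ) ≤ (n + 1 : ℕ) * π := by positivity
  have := intermediate_value_Icc (by positivity) hcont
  obtain ⟨a, ha, hav⟩ := this (show ((n + 1 : ℕ) * π : ℝ) ∈ _ from by
    constructor
    · simpa using hp
    · have := arctan_lt_pi_div_two ((n + 1 : ℕ) * π + 2)
      linarith)
  simp only at hav
  have h1 : 0 ≤ arctan a := arctan_nonneg.2 ha.1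
  have h2 : (n:ℝ) + 1 ≤ a := by
    push_cast at hav
    have : (0:ℝ) ≤ n := by positivity
    nlinarith
  exact ⟨a, by have : (0:ℝ) ≤ n := by positivity
               linarith, h2, hav⟩

theorem stmt_1 :
    ∃ α : ℕ → ℝ, (∀ n, 1 < α n) ∧ Tendsto α atTop atTop ∧
      ∀ n : ℕ,
        (∀ Λ : ℝ,
          {p : ℕ × ℝ | IsPosBesselZero p.1 p.2 ∧
            p.2 ^ 2 - (α n) ^ 2 * (p.1 : ℝ) ^ 2 = Λ}.Finite) ∧
        (∃ c : ℝ, 0 < c ∧ ∀ (ℓ : ℕ) (j : ℝ), IsPosBesselZero ℓ j →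
          j ^ 2 - (α n) ^ 2 * (ℓ : ℝ) ^ 2 = 0 ∨
          |j ^ 2 - (α n) ^ 2 * (ℓ : ℝ) ^ 2| ≥ c * j) ∧
        (∀ Λ : ℝ, ¬ AccPt Λ (Filter.principal
          {x : ℝ | ∃ (ℓ : ℕ) (j : ℝ), IsPosBesselZero ℓ j ∧
            x = j ^ 2 - (α n) ^ 2 * (ℓ : ℝ) ^ 2})) := by
  choose a ha0 han hav using exists_a
  have hα1 : ∀ n, 1 < √(1 + a n ^ 2) := fun n => by
    apply lt_sqrt_of_sq_lt; have := ha0 n; nlinarith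
  refine ⟨fun n => √(1 + a n ^ 2), hα1, ?_, fun n => ?_⟩
  · refine tendsto_atTop_mono (f := fun n : ℕ => (n:ℝ)) (fun n => ?_) tendsto_natCast_atTop_atTop
    apply le_sqrt_of_sq_le
    have := han n
    have : (n:ℝ) ^ 2 ≤ a n ^ 2 := by gcongr; linarith
    linarith
  · obtain ⟨L, hL⟩ := A3 (a n) (ha0 n) (n + 1) (hav n)
    have H : ∀ ℓ : ℕ, L ≤ ℓ → ∀ j : ℝ, IsPosBesselZero ℓ j →
        1 / 1000 ≤ |j - √(1 + a n ^ 2) * ℓ| := by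
      intro ℓ hℓ j hj
      by_contra hlt
      push Not at hlt
      apply hL ℓ hℓ j hlt.le
      rw [← bessel_integral, hj.2, mul_zero]
    refine ⟨fun Λ => ?_, D2 _ (hα1 n) L H, fun Λ hacc => ?_⟩
    · refine (D1 _ (hα1 n) L H |Λ|).subset ?_
      rintro p ⟨h1, h2⟩
      exact ⟨h1, by simp only at h2; rw [h2]⟩
    · rw [accPt_iff_frequently_nhdsNE] at hacc
      have hfin := (D1 _ (hα1 n) L H (|Λ| + 1)).image
        (fun p : ℕ × ℝ => p.2 ^ 2 - √(1 + a n ^ 2) ^ 2 * (p.1 : ℝ) ^ 2)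
      have h1 : ∀ᶠ y in nhdsWithin Λ {Λ}ᶜ, y ∉ (fun p : ℕ × ℝ => p.2 ^ 2 - √(1 + a n ^ 2) ^ 2 * (p.1 : ℝ) ^ 2) ''
          {p : ℕ × ℝ | IsPosBesselZero p.1 p.2 ∧
            |p.2 ^ 2 - √(1 + a n ^ 2) ^ 2 * (p.1 : ℝ) ^ 2| ≤ |Λ| + 1} := by
        by_contra hcon
        have hfr := not_eventually.1 hcon
        simp only [not_not] at hfr
        exact Set.Infinite.of_accPt (accPt_iff_frequently_nhdsNE.2 hfr) hfin
      have h2 : ∀ᶠ y in nhdsWithin Λ {Λ}ᶜ, |y| ≤ |Λ| + 1 := by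
        apply eventually_nhdsWithin_of_eventually_nhds
        have : ∀ᶠ y in nhds Λ, |y| < |Λ| + 1 :=
          (continuous_abs.tendsto Λ).eventually_lt_const (by linarith)
        exact this.mono fun y hy => hy.le
      obtain ⟨y, ⟨ℓ, j, hj, rfl⟩, h3, h4⟩ := (hacc.and_eventually (h1.and h2)).exists
      exact h3 ⟨(ℓ, j), ⟨hj, h4⟩, rfl⟩
end

section
/- Define g : (1, ∞) → ℝ by g(t) = arccos(1/t) / √(1 − 1/t²). Then for every t > 1, g is differentiable at t with derivative g'(t) = (1/(t² − 1)) · (1 − arccos(1/t)/√(t² − 1)), this derivative is strictly positive, and consequently g is strictly increasing on (1, ∞). -/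
open Real Set

/-- The function `g(t) = arccos(1/t) / √(1 - 1/t²)`. -/
noncomputable def gFun (t : ℝ) : ℝ := Real.arccos (1 / t) / Real.sqrt (1 - 1 / t ^ 2)

theorem stmt_3 :
    (∀ t : ℝ, 1 < t →
      HasDerivAt gFun ((1 / (t ^ 2 - 1)) * (1 - Real.arccos (1 / t) / Real.sqrt (t ^ 2 - 1))) t ∧
      0 < (1 / (t ^ 2 - 1)) * (1 - Real.arccos (1 / t) / Real.sqrt (t ^ 2 - 1))) ∧
    StrictMonoOn gFun (Set.Ioi 1) := by
  have key : ∀ t : ℝ, 1 < t →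
      HasDerivAt gFun ((1 / (t ^ 2 - 1)) * (1 - Real.arccos (1 / t) / Real.sqrt (t ^ 2 - 1))) t ∧
      0 < (1 / (t ^ 2 - 1)) * (1 - Real.arccos (1 / t) / Real.sqrt (t ^ 2 - 1)) := by
    intro t ht
    have ht0 : 0 < t := by linarith
    have hq : 0 < t ^ 2 - 1 := by nlinarith
    have hinv : 1 / t < 1 := by rw [div_lt_one ht0]; exact ht
    have hinv0 : 0 < 1 / t := by positivity
    have hs : 0 < √(t ^ 2 - 1) := Real.sqrt_pos.mpr hq
    have hs2 : √(t ^ 2 - 1) ^ 2 = t ^ 2 - 1 := Real.sq_sqrt hq.le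
    have e1 : 1 - 1 / t ^ 2 = (t ^ 2 - 1) / t ^ 2 := by field_simp
    have hst : √(1 - 1 / t ^ 2) = √(t ^ 2 - 1) / t := by
      rw [e1, Real.sqrt_div hq.le, Real.sqrt_sq ht0.le]
    have hst' : √(1 - (1 / t) ^ 2) = √(t ^ 2 - 1) / t := by
      rw [← hst]; congr 2; rw [div_pow, one_pow]
    have hpos : 0 < 1 - 1 / t ^ 2 := by rw [e1]; positivity
    constructor
    · have d0 : HasDerivAt (fun x : ℝ => 1 / x) (-(1 / t ^ 2)) t := by
        simpa using hasDerivAt_inv ht0.ne'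
      have d1 := (Real.hasDerivAt_arccos (x := 1 / t) (by linarith) hinv.ne).comp t d0
      have d2 : HasDerivAt (fun x : ℝ => 1 - 1 / x ^ 2) (2 / t ^ 3) t := by
        have := ((d0.pow 2).const_sub 1)
        have e : (fun x : ℝ => 1 - 1 / x ^ 2) = fun x => 1 - ((fun x : ℝ => 1 / x) ^ 2) x := by
          ext x; simp
        rw [e]
        refine this.congr_deriv ?_
        norm_num
        field_simp
      have d3 := d1.div (d2.sqrt hpos.ne') (by rw [hst]; positivity)
      have : gFun = (arccos ∘ fun x : ℝ => 1 / x) / (fun x : ℝ => √(1 - 1 / x ^ 2)) := by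
        ext x; simp [gFun]
      rw [this]
      refine d3.congr_deriv ?_
      simp only [Function.comp_apply]
      rw [hst, hst']
      clear d3 d2 d1 d0 this hst hst'
      generalize √(t ^ 2 - 1) = s at *
      generalize arccos (1 / t) = a at *
      rw [← hs2]
      field_simp
    · have h1 : arccos (1 / t) < √(t ^ 2 - 1) := by
        have := Real.lt_tan (Real.arccos_pos.mpr hinv) (Real.arccos_lt_pi_div_two.mpr hinv0)
        rw [Real.tan_arccos, hst'] at this
        convert this using 1
        field_simp
      have : arccos (1 / t) / √(t ^ 2 - 1) < 1 := by rwa [div_lt_one hs]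
      exact mul_pos (by positivity) (by linarith)
  refine ⟨key, strictMonoOn_of_deriv_pos (convex_Ioi 1) ?_ ?_⟩
  · intro x hx
    exact (key x hx).1.continuousAt.continuousWithinAt
  · intro x hx
    rw [interior_Ioi] at hx
    rw [(key x hx).1.deriv]
    exact (key x hx).2
end

section
/- Define g : (1, ∞) → ℝ by g(t) = arccos(1/t) / √(1 − 1/t²). Then for all real numbers s, t with 1 < s < t, one has g(t) − g(s) ≤ (t − s)/3; that is, the derivative of g is bounded above by 1/3 on (1, ∞). -/
open Real

lemma key_F (x : ℝ) (hx : 0 < x) (hx2 : x < π / 2) :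
    0 ≤ sin x ^ 3 - 3 * cos x ^ 2 * sin x + 3 * x * cos x ^ 3 := by
  have hd : ∀ y : ℝ, HasDerivAt (fun x : ℝ => sin x ^ 3 - 3 * cos x ^ 2 * sin x + 3 * x * cos x ^ 3)
      (9 * sin y * cos y * (sin y - y * cos y)) y := by
    intro y
    have h1 := (hasDerivAt_sin y).pow 3
    have h2 := (((hasDerivAt_cos y).pow 2).const_mul 3).mul (hasDerivAt_sin y)
    have h3 := ((hasDerivAt_id y).const_mul 3).mul ((hasDerivAt_cos y).pow 3)
    refine HasDerivAt.congr_deriv ((h1.sub h2).add h3) ?_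
    simp
    ring
  have hm : MonotoneOn (fun x : ℝ => sin x ^ 3 - 3 * cos x ^ 2 * sin x + 3 * x * cos x ^ 3)
      (Set.Icc 0 (π / 2)) := by
    apply monotoneOn_of_deriv_nonneg (convex_Icc _ _)
    · exact fun y _ => (hd y).continuousAt.continuousWithinAt
    · exact fun y _ => (hd y).differentiableAt.differentiableWithinAt
    · intro y hy
      rw [interior_Icc] at hy
      rw [(hd y).deriv]
      have hc : 0 < cos y := cos_pos_of_mem_Ioo ⟨by linarith [hy.1, pi_pos], hy.2⟩
      have hs : 0 < sin y := sin_pos_of_pos_of_lt_pi hy.1 (by linarith [hy.2, pi_pos])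
      have ht := lt_tan hy.1 hy.2
      rw [tan_eq_sin_div_cos, lt_div_iff₀ hc] at ht
      have : 0 < sin y - y * cos y := by linarith
      positivity
  have := hm ⟨le_refl _, by positivity⟩ ⟨hx.le, hx2.le⟩ hx.le
  simpa using this

lemma key_H : MonotoneOn (fun x : ℝ => 1 / cos x / 3 - x / sin x) (Set.Ioo 0 (π / 2)) := by
  have hpos : ∀ y ∈ Set.Ioo 0 (π / 2), 0 < cos y ∧ 0 < sin y := fun y hy =>
    ⟨cos_pos_of_mem_Ioo ⟨by linarith [hy.1, pi_pos], hy.2⟩,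
      sin_pos_of_pos_of_lt_pi hy.1 (by linarith [hy.2, pi_pos])⟩
  have hd : ∀ y ∈ Set.Ioo 0 (π / 2), HasDerivAt (fun x : ℝ => 1 / cos x / 3 - x / sin x)
      ((sin y ^ 3 - 3 * cos y ^ 2 * sin y + 3 * y * cos y ^ 3) / (3 * cos y ^ 2 * sin y ^ 2)) y := by
    intro y hy
    obtain ⟨hc, hs⟩ := hpos y hy
    have h1 := (((hasDerivAt_const y (1:ℝ)).div (hasDerivAt_cos y) hc.ne').div_const 3)
    have h2 := (hasDerivAt_id y).div (hasDerivAt_sin y) hs.ne'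
    refine HasDerivAt.congr_deriv (h1.sub h2) ?_
    simp
    field_simp
    ring
  apply monotoneOn_of_deriv_nonneg (convex_Ioo _ _)
  · exact fun y hy => (hd y hy).continuousAt.continuousWithinAt
  · rw [interior_Ioo]
    exact fun y hy => (hd y hy).differentiableAt.differentiableWithinAt
  · intro y hy
    rw [interior_Ioo] at hy
    rw [(hd y hy).deriv]
    exact div_nonneg (key_F y hy.1 hy.2) (by positivity)

lemma gFun_arccos (s : ℝ) (hs : 1 < s) : arccos (1 / s) ∈ Set.Ioo 0 (π / 2) ∧
    1 / cos (arccos (1 / s)) = s ∧ arccos (1 / s) / sin (arccos (1 / s)) = gFun s := by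
  have h0 : 0 < 1 / s := by positivity
  have h1 : 1 / s < 1 := by rw [div_lt_one (by linarith)]; exact hs
  refine ⟨⟨arccos_pos.2 h1, arccos_lt_pi_div_two.2 h0⟩, ?_, ?_⟩
  · rw [cos_arccos (by linarith) h1.le, one_div_one_div]
  · rw [sin_arccos, gFun, div_pow, one_pow]

theorem stmt_4 (s t : ℝ) (hs : 1 < s) (hst : s < t) :
    gFun t - gFun s ≤ (t - s) / 3 := by
  obtain ⟨a1, a2, a3⟩ := gFun_arccos s hs
  obtain ⟨b1, b2, b3⟩ := gFun_arccos t (hs.trans hst)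
  have hle : arccos (1 / s) ≤ arccos (1 / t) :=
    arccos_le_arccos (one_div_le_one_div_of_le (by linarith) hst.le)
  have := key_H a1 b1 hle
  simp only [a2, a3, b2, b3] at this
  linarith
end

section
/- The function (1/(t² − 1)) · (1 − arccos(1/t)/√(t² − 1)) tends to 1/3 as t tends to 1 from the right. -/
open Real Filter

lemma aux_arctan : Tendsto (fun x : ℝ => (x - Real.arctan x) / x ^ 3)
    (nhdsWithin 0 (Set.Ioi 0)) (nhds (1 / 3)) := by
  have hpos : ∀ᶠ x : ℝ in nhdsWithin 0 (Set.Ioi 0), 0 < x := self_mem_nhdsWithin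
  apply HasDerivAt.lhopital_zero_nhdsGT (f' := fun x => 1 - 1 / (1 + x ^ 2))
    (g' := fun x => 3 * x ^ 2)
  · exact Eventually.of_forall fun x => (hasDerivAt_id x).sub (Real.hasDerivAt_arctan x)
  · refine Eventually.of_forall fun x => ?_
    simpa using hasDerivAt_pow 3 x
  · filter_upwards [hpos] with x hx
    positivity
  · have : Continuous fun x : ℝ => x - Real.arctan x := by
      exact continuous_id.sub Real.continuous_arctan
    simpa using (this.tendsto 0).mono_left nhdsWithin_le_nhds
  · have : Continuous fun x : ℝ => x ^ 3 := by fun_prop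
    simpa using (this.tendsto 0).mono_left nhdsWithin_le_nhds
  · have h : Continuous fun x : ℝ => 1 / (3 * (1 + x ^ 2)) := by
      refine continuous_const.div (by fun_prop) fun x => by positivity
    have h2 := (h.tendsto 0).mono_left (nhdsWithin_le_nhds (s := Set.Ioi 0))
    norm_num at h2 ⊢
    refine h2.congr' ?_
    filter_upwards [hpos] with x hx
    have : 1 + x ^ 2 ≠ 0 := by positivity
    field_simp
    ring

theorem stmt_5 :
    Tendsto (fun t : ℝ => (1 / (t ^ 2 - 1)) * (1 - Real.arccos (1 / t) / Real.sqrt (t ^ 2 - 1)))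
      (nhdsWithin 1 (Set.Ioi 1)) (nhds (1 / 3)) := by
  have hpos : ∀ᶠ x : ℝ in nhdsWithin 1 (Set.Ioi 1), 1 < x := self_mem_nhdsWithin
  have hs : Tendsto (fun t : ℝ => Real.sqrt (t ^ 2 - 1)) (nhdsWithin 1 (Set.Ioi 1))
      (nhdsWithin 0 (Set.Ioi 0)) := by
    refine tendsto_nhdsWithin_iff.2 ⟨?_, ?_⟩
    · have : Continuous fun t : ℝ => Real.sqrt (t ^ 2 - 1) := by fun_prop
      simpa using (this.tendsto 1).mono_left nhdsWithin_le_nhds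
    · filter_upwards [hpos] with t ht
      exact Real.sqrt_pos.2 (by nlinarith)
  refine (aux_arctan.comp hs).congr' ?_
  filter_upwards [hpos] with t ht
  have h0 : 0 < t ^ 2 - 1 := by nlinarith
  have hsp := Real.sqrt_pos.2 h0
  have hsq := Real.sq_sqrt h0.le
  have ha : Real.arctan (Real.sqrt (t ^ 2 - 1)) = Real.arccos (1 / t) := by
    rw [Real.arctan_eq_arccos hsp.le, hsq, add_sub_cancel, Real.sqrt_sq (by linarith), one_div]
  simp only [Function.comp, ha]
  generalize Real.arccos (1 / t) = a
  rw [← hsq, Real.sqrt_sq hsp.le]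
  field_simp
end

section
/- Define h : (1, ∞) → ℝ by h(y) = √(y² − 1) − (π/2 − arcsin(1/y)). Then h is strictly positive and strictly increasing on (1, ∞), h(y) → 0 as y → 1⁺, and h(y) → ∞ as y → ∞. Consequently, y ↦ π/h(y) is a strictly decreasing bijection from (1, ∞) onto (0, ∞). -/
open Real Filter Set

/-- The function `h(y) = √(y² − 1) − (π/2 − arcsin(1/y))`. -/
noncomputable def hFun (y : ℝ) : ℝ :=
  Real.sqrt (y ^ 2 - 1) - (Real.pi / 2 - Real.arcsin (1 / y))

theorem hFun_cont : ContinuousOn hFun (Set.Ici 1) := by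
  unfold hFun
  refine ContinuousOn.sub (by fun_prop) (ContinuousOn.sub (by fun_prop) ?_)
  refine Real.continuous_arcsin.comp_continuousOn ?_
  refine ContinuousOn.div (by fun_prop) (by fun_prop) ?_
  intro x hx
  have : (1:ℝ) ≤ x := hx
  positivity

theorem hFun_deriv (y : ℝ) (hy : 1 < y) : HasDerivAt hFun (Real.sqrt (y ^ 2 - 1) / y) y := by
  have hy0 : 0 < y := by linarith
  have hp : 0 < y ^ 2 - 1 := by nlinarith
  have hs : 0 < Real.sqrt (y ^ 2 - 1) := Real.sqrt_pos.2 hp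
  have hsq : Real.sqrt (y ^ 2 - 1) ^ 2 = y ^ 2 - 1 := Real.sq_sqrt hp.le
  have h1 : HasDerivAt (fun x : ℝ => Real.sqrt (x ^ 2 - 1))
      ((2 * y) / (2 * Real.sqrt (y ^ 2 - 1))) y := by
    have : HasDerivAt (fun x : ℝ => x ^ 2 - 1) (2 * y) y := by
      simpa using (hasDerivAt_pow 2 y).sub_const 1
    exact this.sqrt hp.ne'
  have hlt : 1 / y < 1 := by rw [div_lt_one hy0]; exact hy
  have hpos : 0 < 1 / y := by positivity
  have h2 : HasDerivAt (fun x : ℝ => 1 / x) (-(y ^ 2)⁻¹) y := by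
    simpa using hasDerivAt_inv hy0.ne'
  have h3 := (Real.hasDerivAt_arcsin (x := 1 / y) (by linarith) hlt.ne).comp y h2
  have h4 := h1.sub (h3.const_sub (Real.pi / 2))
  have he : Real.sqrt (1 - (1 / y) ^ 2) = Real.sqrt (y ^ 2 - 1) / y := by
    rw [show 1 - (1 / y) ^ 2 = (y ^ 2 - 1) / y ^ 2 by field_simp,
      Real.sqrt_div hp.le, Real.sqrt_sq hy0.le]
  rw [he] at h4
  refine HasDerivAt.congr_deriv (f := hFun) h4 ?_
  field_simp
  rw [hsq]

theorem hFun_mono : StrictMonoOn hFun (Set.Ici 1) := by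
  refine strictMonoOn_of_deriv_pos (convex_Ici 1) hFun_cont ?_
  intro y hy
  rw [interior_Ici] at hy
  have hy' : 1 < y := hy
  rw [(hFun_deriv y hy').deriv]
  have hp : 0 < y ^ 2 - 1 := by nlinarith
  have := Real.sqrt_pos.2 hp
  positivity

theorem hFun_one : hFun 1 = 0 := by simp [hFun]

theorem stmt_6 :
    (∀ y : ℝ, 1 < y → 0 < hFun y) ∧
    StrictMonoOn hFun (Set.Ioi 1) ∧
    Tendsto hFun (nhdsWithin 1 (Set.Ioi 1)) (nhds 0) ∧
    Tendsto hFun atTop atTop ∧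
    StrictAntiOn (fun y => Real.pi / hFun y) (Set.Ioi 1) ∧
    Set.BijOn (fun y => Real.pi / hFun y) (Set.Ioi 1) (Set.Ioi 0) := by
  have hpos : ∀ y : ℝ, 1 < y → 0 < hFun y := by
    intro y hy
    have := hFun_mono (Set.mem_Ici.2 le_rfl) (Set.mem_Ici.2 hy.le) hy
    rwa [hFun_one] at this
  have hmono : StrictMonoOn hFun (Set.Ioi 1) := hFun_mono.mono Set.Ioi_subset_Ici_self
  have htop : Tendsto hFun atTop atTop := by
    refine tendsto_atTop_mono' atTop (f₁ := fun y : ℝ => y - 1 - Real.pi / 2) ?_ ?_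
    · filter_upwards [eventually_ge_atTop (1:ℝ)] with y hy
      have h1 : y - 1 ≤ Real.sqrt (y ^ 2 - 1) := Real.le_sqrt_of_sq_le (by nlinarith)
      have h2 : 0 ≤ Real.arcsin (1 / y) := Real.arcsin_nonneg.2 (by positivity)
      unfold hFun
      linarith
    · exact tendsto_atTop_add_const_right _ _ (tendsto_atTop_add_const_right _ _ tendsto_id)
  have hanti : StrictAntiOn (fun y => Real.pi / hFun y) (Set.Ioi 1) := by
    intro a ha b hb hab
    exact div_lt_div_of_pos_left Real.pi_pos (hpos a ha) (hmono ha hb hab)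
  refine ⟨hpos, hmono, ?_, htop, hanti, ?_, hanti.injOn, ?_⟩
  · have := (hFun_cont 1 (Set.mem_Ici.2 le_rfl)).mono Set.Ioi_subset_Ici_self
    rw [ContinuousWithinAt, hFun_one] at this
    exact this
  · intro y hy
    exact div_pos Real.pi_pos (hpos y hy)
  · intro z hz
    have hz' : 0 < z := hz
    have hw : 0 < Real.pi / z := div_pos Real.pi_pos hz'
    obtain ⟨M, hM, hM1⟩ := ((htop.eventually_ge_atTop (Real.pi / z)).and
      (eventually_ge_atTop (1:ℝ))).exists
    obtain ⟨y, hy, hyz⟩ := intermediate_value_Icc hM1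
      (hFun_cont.mono Set.Icc_subset_Ici_self) ⟨by rw [hFun_one]; exact hw.le, hM⟩
    refine ⟨y, ?_, ?_⟩
    · rcases hy.1.eq_or_lt with h | h
      · rw [← h, hFun_one] at hyz
        exact absurd hyz hw.ne
      · exact h
    · simp only [hyz]
      field_simp
end

section
/- Let y > 1 be real, set φ = arcsin(1/y) and x = π / (√(y² − 1) − (π/2 − arcsin(1/y))). Then φ ∈ (0, π/2), cos φ − (π/2 − φ)·sin φ > 0, sin φ / (cos φ − (π/2 − φ)·sin φ) = x/π, and 1/sin φ = y. -/
open Real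

theorem stmt_7 (y : ℝ) (hy : 1 < y)
    (φ : ℝ) (hφ : φ = Real.arcsin (1 / y))
    (x : ℝ) (hx : x = Real.pi / (Real.sqrt (y ^ 2 - 1) - (Real.pi / 2 - Real.arcsin (1 / y)))) :
    φ ∈ Set.Ioo 0 (Real.pi / 2) ∧
    0 < Real.cos φ - (Real.pi / 2 - φ) * Real.sin φ ∧
    Real.sin φ / (Real.cos φ - (Real.pi / 2 - φ) * Real.sin φ) = x / Real.pi ∧
    1 / Real.sin φ = y := by
  have hy0 : 0 < y := by linarith
  have h1 : 1 / y < 1 := by rw [div_lt_one hy0]; exact hy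
  have h0 : 0 < 1 / y := by positivity
  have hsin : Real.sin φ = 1 / y := by
    rw [hφ]; exact Real.sin_arcsin (by linarith) h1.le
  have hp : 0 < φ := by rw [hφ]; exact Real.arcsin_pos.2 h0
  have hl : φ < Real.pi / 2 := by rw [hφ]; exact Real.arcsin_lt_pi_div_two.2 h1
  have hcos : Real.cos φ = Real.sqrt (y ^ 2 - 1) / y := by
    rw [hφ, Real.cos_arcsin]
    have : 1 - (1 / y) ^ 2 = (y ^ 2 - 1) / y ^ 2 := by field_simp
    rw [this, Real.sqrt_div' _ (by positivity), Real.sqrt_sq hy0.le]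
  have ht := Real.lt_tan (x := Real.pi / 2 - φ) (by linarith) (by linarith)
  rw [Real.tan_eq_sin_div_cos, Real.sin_pi_div_two_sub, Real.cos_pi_div_two_sub,
    lt_div_iff₀ (by rw [hsin]; exact h0)] at ht
  have hd : Real.cos φ - (Real.pi / 2 - φ) * Real.sin φ
      = (Real.sqrt (y ^ 2 - 1) - (Real.pi / 2 - φ)) / y := by
    rw [hcos, hsin]; ring
  have hpos : 0 < Real.cos φ - (Real.pi / 2 - φ) * Real.sin φ := by linarith
  refine ⟨⟨hp, hl⟩, hpos, ?_, by rw [hsin, one_div_one_div]⟩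
  rw [← hφ] at hx
  rw [hd] at hpos ⊢
  have hD : 0 < Real.sqrt (y ^ 2 - 1) - (Real.pi / 2 - φ) := by
    have := mul_pos hpos hy0
    rwa [div_mul_cancel₀ _ hy0.ne'] at this
  have hpi := Real.pi_pos.ne'
  rw [hx, hsin]
  generalize Real.sqrt (y ^ 2 - 1) - (Real.pi / 2 - φ) = D at hD
  field_simp
end

section
/- Let ν > 0 be real, let k ≥ 1 be an integer, and let j be the k-th positive zero of J_ν. Then ν + ((3π/8)(4k − 2))^{2/3} · 2^{−1/3} · ν^{1/3} < j < ν + ((3π/2)·k)^{2/3} · 2^{−1/3} · ν^{1/3} + (3/20) · ((3π/2)·k)^{4/3} · 2^{1/3} · ν^{−1/3}. -/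
open Real Set

/-- `j` is the `k`-th positive zero of the Bessel function `J_ν`. -/
def IsKthBesselZero (ν : ℝ) (k : ℕ) (j : ℝ) : Prop :=
  0 < j ∧ besselJ ν j = 0 ∧
    {t : ℝ | t ∈ Set.Ioo 0 j ∧ besselJ ν t = 0}.encard = (k - 1 : ℕ)

noncomputable def bH (ν z : ℝ) : ℝ :=
  ∑' m : ℕ, (-1 : ℝ) ^ m / (m.factorial * Real.Gamma (m + ν + 1)) * z ^ m

lemma gamma_ge (ν : ℝ) (hν : 0 < ν) (m : ℕ) : Real.Gamma (ν + 1) ≤ Real.Gamma (m + ν + 1) := by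
  induction m with
  | zero => simp
  | succ m ih =>
    have h : ((m + 1 : ℕ) : ℝ) + ν + 1 = ((m : ℝ) + ν + 1) + 1 := by push_cast; ring
    have h0 : 0 < (m : ℝ) + ν + 1 := by positivity
    rw [h, Real.Gamma_add_one h0.ne']
    have h1 := Real.Gamma_pos_of_pos h0
    have : (0 : ℝ) ≤ m := by positivity
    nlinarith

lemma coef_bound (ν : ℝ) (hν : 0 < ν) (m : ℕ) :
    |(-1 : ℝ) ^ m / (m.factorial * Real.Gamma (m + ν + 1))| ≤
      1 / (m.factorial : ℝ) * (1 / Real.Gamma (ν + 1)) := by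
  have h0 : 0 < Real.Gamma (ν + 1) := Real.Gamma_pos_of_pos (by positivity)
  have h1 := gamma_ge ν hν m
  have hf : (0 : ℝ) < m.factorial := by positivity
  rw [abs_div, abs_pow, abs_neg, abs_one, one_pow, abs_of_pos (by positivity), div_mul_div_comm,
    one_mul]
  gcongr

lemma bH_summable (ν : ℝ) (hν : 0 < ν) (z : ℝ) :
    Summable (fun m : ℕ => (-1 : ℝ) ^ m / (m.factorial * Real.Gamma (m + ν + 1)) * z ^ m) := by
  have hs := (Real.summable_pow_div_factorial |z|).mul_right (1 / Real.Gamma (ν + 1))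
  refine Summable.of_norm_bounded hs (fun m => ?_)
  rw [norm_mul, Real.norm_eq_abs, Real.norm_eq_abs, abs_pow]
  calc _ ≤ 1 / (m.factorial : ℝ) * (1 / Real.Gamma (ν + 1)) * |z| ^ m := by
        gcongr; exact coef_bound ν hν m
    _ = _ := by ring

lemma bH_hasDerivAt (ν : ℝ) (hν : 0 < ν) (z : ℝ) :
    HasDerivAt (bH ν) (- bH (ν + 1) z) z := by
  set R := |z| + 1 with hR
  have hR0 : 0 < R := by positivity
  have hsum : Summable (fun m : ℕ => (1 / Real.Gamma (ν + 1)) *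
      (1 / (m.factorial : ℝ) * ((m : ℝ) * R ^ (m - 1)))) := by
    apply Summable.mul_left
    rw [← summable_nat_add_iff 1]
    refine (Real.summable_pow_div_factorial R).congr (fun m => ?_)
    rw [Nat.factorial_succ]
    have : (m.factorial : ℝ) ≠ 0 := by positivity
    push_cast
    try simp only [Nat.add_sub_cancel]
    field_simp
  have key := hasDerivAt_tsum_of_isPreconnected (𝕜 := ℝ)
    (g := fun (m : ℕ) (z : ℝ) =>
      (-1 : ℝ) ^ m / (m.factorial * Real.Gamma (m + ν + 1)) * z ^ m)
    (g' := fun (m : ℕ) (z : ℝ) =>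
      (-1 : ℝ) ^ m / (m.factorial * Real.Gamma (m + ν + 1)) * ((m : ℝ) * z ^ (m - 1)))
    (t := Metric.ball 0 R) (y₀ := 0) (y := z) hsum Metric.isOpen_ball
    (convex_ball 0 R).isPreconnected
    (fun n y _ => (hasDerivAt_pow n y).const_mul _)
    (fun n y hy => by
      have hy' : |y| ≤ R := by simpa using (le_of_lt (mem_ball_zero_iff.mp hy))
      rw [norm_mul, norm_mul, norm_pow, Real.norm_eq_abs, Real.norm_eq_abs, Real.norm_eq_abs,
        Nat.abs_cast]
      calc _ ≤ 1 / (n.factorial : ℝ) * (1 / Real.Gamma (ν + 1)) * ((n : ℝ) * R ^ (n - 1)) := by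
            gcongr
            exact coef_bound ν hν n
        _ = _ := by ring)
    (by simpa using hR0) (bH_summable ν hν 0) (by simp [hR])
  have key2 : HasDerivAt (bH ν) _ z := key
  refine key2.congr_deriv ?_
  unfold bH
  rw [Summable.tsum_eq_zero_add]
  · simp only [Nat.factorial_zero, Nat.cast_zero, zero_mul, mul_zero, zero_add]
    rw [← tsum_neg]
    apply tsum_congr
    intro m
    rw [Nat.factorial_succ]
    have : (m.factorial : ℝ) ≠ 0 := by positivity
    have h2 : Real.Gamma ((m : ℝ) + (ν + 1) + 1) ≠ 0 :=
      (Real.Gamma_pos_of_pos (by positivity)).ne'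
    have h3 : ((m + 1 : ℕ) : ℝ) + ν + 1 = (m : ℝ) + (ν + 1) + 1 := by push_cast; ring
    rw [h3]
    push_cast
    try simp only [Nat.add_sub_cancel]
    field_simp
    ring
  · refine Summable.of_norm_bounded hsum (fun n => ?_)
    have hy' : |z| ≤ R := by simp [hR]
    rw [norm_mul, norm_mul, norm_pow, Real.norm_eq_abs, Real.norm_eq_abs, Real.norm_eq_abs,
        Nat.abs_cast]
    calc _ ≤ 1 / (n.factorial : ℝ) * (1 / Real.Gamma (ν + 1)) * ((n : ℝ) * R ^ (n - 1)) := by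
            gcongr
            exact coef_bound ν hν n
        _ = _ := by ring

lemma bH_rec (ν : ℝ) (hν : 0 < ν) (z : ℝ) :
    bH ν z = (ν + 1) * bH (ν + 1) z - z * bH (ν + 2) z := by
  have s0 := bH_summable ν hν z
  have s1 := bH_summable (ν + 1) (by positivity) z
  have s2 := bH_summable (ν + 2) (by positivity) z
  unfold bH
  rw [← tsum_mul_left, ← tsum_mul_left, s0.tsum_eq_zero_add, (s1.mul_left (ν + 1)).tsum_eq_zero_add,
    add_sub_assoc, ← Summable.tsum_sub ((summable_nat_add_iff 1).mpr (s1.mul_left (ν + 1)))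
      (s2.mul_left z)]
  congr 1
  · have := Real.Gamma_add_one (s := ν + 1) (by positivity)
    have hp := Real.Gamma_pos_of_pos (s := ν + 1) (by positivity)
    simp only [Nat.factorial_zero, Nat.cast_zero, zero_add, pow_zero, Nat.cast_one, this]
    field_simp
  · apply tsum_congr
    intro m
    have h3 : ((m + 1 : ℕ) : ℝ) + ν + 1 = (m : ℝ) + ν + 2 := by push_cast; ring
    have h4 : ((m + 1 : ℕ) : ℝ) + (ν + 1) + 1 = ((m : ℝ) + ν + 2) + 1 := by push_cast; ring
    have h5 : (m : ℝ) + (ν + 2) + 1 = ((m : ℝ) + ν + 2) + 1 := by ring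
    have h6 : (m : ℝ) + ν + 2 ≠ 0 := by positivity
    have hp := Real.Gamma_pos_of_pos (s := (m : ℝ) + ν + 2) (by positivity)
    rw [h3, h4, h5, Real.Gamma_add_one h6, Nat.factorial_succ]
    have : (m.factorial : ℝ) ≠ 0 := by positivity
    push_cast
    field_simp
    ring

lemma besselJ_eq (ν x : ℝ) (hx : 0 < x) : besselJ ν x = (x / 2) ^ ν * bH ν ((x / 2) ^ 2) := by
  unfold besselJ bH
  rw [← tsum_mul_left]
  apply tsum_congr
  intro m
  rw [Real.rpow_add (by positivity), ← pow_mul, ← Real.rpow_natCast (x / 2) (2 * m)]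
  push_cast
  ring

noncomputable def besselV (ν x : ℝ) : ℝ :=
  (x / 2) ^ ν * (ν * bH ν ((x / 2) ^ 2) - 2 * (x / 2) ^ 2 * bH (ν + 1) ((x / 2) ^ 2))

def BSol (ν : ℝ) (J V : ℝ → ℝ) : Prop :=
  ∀ x, 0 < x → HasDerivAt J (V x / x) x ∧ HasDerivAt V ((ν ^ 2 - x ^ 2) / x * J x) x

lemma BSol.neg {ν : ℝ} {J V : ℝ → ℝ} (h : BSol ν J V) :
    BSol ν (fun x => - J x) (fun x => - V x) := by
  intro x hx
  refine ⟨(h x hx).1.neg.congr_deriv (by ring), (h x hx).2.neg.congr_deriv (by ring)⟩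

lemma bessel_sol (ν : ℝ) (hν : 0 < ν) : BSol ν (besselJ ν) (besselV ν) := by
  intro x hx
  have hx2 : (0 : ℝ) < x / 2 := by positivity
  have d0 : HasDerivAt (fun x : ℝ => x / 2) (1 / 2) x := (hasDerivAt_id x).div_const 2
  have dz : HasDerivAt (fun x : ℝ => (x / 2) ^ 2) (x / 2) x := (d0.pow 2).congr_deriv (by
    simp only [Nat.cast_ofNat, Nat.add_one_sub_one, pow_one]; ring)
  have dp : HasDerivAt (fun x : ℝ => (x / 2) ^ ν) (ν * (x / 2) ^ ν / x) x :=
    (d0.rpow_const (p := ν) (Or.inl hx2.ne')).congr_deriv (by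
      rw [Real.rpow_sub_one hx2.ne']; field_simp)
  have dH : HasDerivAt (fun x : ℝ => bH ν ((x / 2) ^ 2)) (- bH (ν + 1) ((x / 2) ^ 2) * (x / 2)) x :=
    HasDerivAt.comp (h₂ := bH ν) (h := fun x : ℝ => (x / 2) ^ 2) x (bH_hasDerivAt ν hν _) dz
  have dH1 : HasDerivAt (fun x : ℝ => bH (ν + 1) ((x / 2) ^ 2))
      (- bH (ν + 1 + 1) ((x / 2) ^ 2) * (x / 2)) x :=
    HasDerivAt.comp (h₂ := bH (ν + 1)) (h := fun x : ℝ => (x / 2) ^ 2) x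
      (bH_hasDerivAt (ν + 1) (by positivity) _) dz
  constructor
  · have : HasDerivAt (fun x => (x / 2) ^ ν * bH ν ((x / 2) ^ 2)) (besselV ν x / x) x := by
      refine (dp.mul dH).congr_deriv ?_
      unfold besselV
      field_simp
      ring
    refine this.congr_of_eventuallyEq ?_
    filter_upwards [lt_mem_nhds hx] with y hy using besselJ_eq ν y hy
  · refine (dp.mul ((dH.const_mul ν).sub ((dz.const_mul 2).mul dH1))).congr_deriv ?_
    have : ν + 1 + 1 = ν + 2 := by ring
    simp only [Pi.mul_apply, Pi.sub_apply]
    rw [this, besselJ_eq ν x hx, bH_rec ν hν ((x / 2) ^ 2)]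
    field_simp
    ring

lemma bessel_init (ν : ℝ) (hν : 0 < ν) :
    ∃ ε > 0, ∀ x, 0 < x → x < ε → 0 < besselJ ν x ∧ 0 < besselV ν x := by
  have hc0 : Continuous (bH ν) :=
    continuous_iff_continuousAt.mpr fun z => (bH_hasDerivAt ν hν z).continuousAt
  have hc1 : Continuous (bH (ν + 1)) :=
    continuous_iff_continuousAt.mpr fun z => (bH_hasDerivAt (ν + 1) (by positivity) z).continuousAt
  have hp : 0 < bH ν 0 := by
    unfold bH
    rw [tsum_eq_single 0]
    · simp [Real.Gamma_pos_of_pos (s := ν + 1) (by positivity)]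
    · intro m hm; simp [hm]
  have c0 : Continuous (fun x : ℝ => bH ν ((x / 2) ^ 2)) := by fun_prop
  have c1 : Continuous (fun x : ℝ =>
    ν * bH ν ((x / 2) ^ 2) - 2 * (x / 2) ^ 2 * bH (ν + 1) ((x / 2) ^ 2)) := by fun_prop
  have e0 := (c0.tendsto 0).eventually_const_lt (u := 0) (by simpa using hp)
  have e1 := (c1.tendsto 0).eventually_const_lt (u := 0) (by simpa using mul_pos hν hp)
  obtain ⟨ε, hε, h⟩ := Metric.eventually_nhds_iff.mp (e0.and e1)
  refine ⟨ε, hε, fun x hx hxe => ?_⟩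
  have := h (y := x) (by simpa [abs_of_pos hx] using hxe)
  have hx2 : (0 : ℝ) < (x / 2) ^ ν := by positivity
  rw [besselJ_eq ν x hx]
  exact ⟨mul_pos hx2 this.1, mul_pos hx2 this.2⟩

lemma mono_help {f f' : ℝ → ℝ} {a b : ℝ} (hab : a < b) (hc : ContinuousOn f (Icc a b))
    (hd : ∀ x ∈ Ioo a b, HasDerivAt f (f' x) x) (hp : ∀ x ∈ Ioo a b, 0 < f' x) : f a < f b := by
  obtain ⟨c, hc1, hc2⟩ := exists_hasDerivAt_eq_slope f f' hab hc hd
  have := hp c hc1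
  rw [hc2] at this
  have h2 : 0 < b - a := by linarith
  have h3 := (div_pos_iff_of_pos_right h2).mp this
  linarith

noncomputable def th (ν x : ℝ) : ℝ :=
  √(x ^ 2 - ν ^ 2) - ν * Real.arctan (√(x ^ 2 - ν ^ 2) / ν)

noncomputable def rr (ν x : ℝ) : ℝ := √(√(x ^ 2 - ν ^ 2))

lemma th_cont (ν : ℝ) : Continuous (th ν) := by
  unfold th; fun_prop

lemma th_self (ν : ℝ) : th ν ν = 0 := by simp [th]

lemma sq_pos' {ν x : ℝ} (hν : 0 < ν) (hx : ν < x) : 0 < x ^ 2 - ν ^ 2 := by nlinarith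

lemma rr_pos {ν x : ℝ} (hν : 0 < ν) (hx : ν < x) : 0 < rr ν x :=
  Real.sqrt_pos.mpr (Real.sqrt_pos.mpr (sq_pos' hν hx))

lemma rr_sq (ν x : ℝ) : rr ν x ^ 2 = √(x ^ 2 - ν ^ 2) := Real.sq_sqrt (Real.sqrt_nonneg _)

lemma rr_four {ν x : ℝ} (hν : 0 < ν) (hx : ν < x) : rr ν x ^ 4 = x ^ 2 - ν ^ 2 := by
  rw [show rr ν x ^ 4 = (rr ν x ^ 2) ^ 2 by ring, rr_sq, Real.sq_sqrt (sq_pos' hν hx).le]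

lemma q_deriv {ν x : ℝ} (hν : 0 < ν) (hx : ν < x) :
    HasDerivAt (fun x => √(x ^ 2 - ν ^ 2)) (x / rr ν x ^ 2) x := by
  have h := (((hasDerivAt_pow 2 x).sub_const (ν ^ 2)).sqrt (sq_pos' hν hx).ne')
  refine h.congr_deriv ?_
  rw [rr_sq]
  have := Real.sqrt_pos.mpr (sq_pos' hν hx)
  field_simp
  simp

lemma rr_deriv {ν x : ℝ} (hν : 0 < ν) (hx : ν < x) :
    HasDerivAt (rr ν) (x / (2 * rr ν x ^ 3)) x := by
  have h0 := Real.sqrt_pos.mpr (sq_pos' hν hx)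
  have h := (q_deriv hν hx).sqrt h0.ne'
  refine h.congr_deriv ?_
  have hr := rr_pos hν hx
  change x / rr ν x ^ 2 / (2 * rr ν x) = _
  field_simp

lemma th_deriv {ν x : ℝ} (hν : 0 < ν) (hx : ν < x) :
    HasDerivAt (th ν) (rr ν x ^ 2 / x) x := by
  have h := (q_deriv hν hx).sub ((((q_deriv hν hx).div_const ν).arctan).const_mul ν)
  refine h.congr_deriv ?_
  rw [← rr_sq]
  have hr := rr_pos hν hx
  have h4 := rr_four hν hx
  have hx0 : 0 < x := hν.trans hx
  have : 1 + (rr ν x ^ 2 / ν) ^ 2 = x ^ 2 / ν ^ 2 := by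
    rw [div_pow, ← pow_mul, h4]; field_simp; ring
  rw [this]
  field_simp
  linear_combination -h4

lemma th_mono {ν a b : ℝ} (hν : 0 < ν) (ha : ν ≤ a) (hab : a < b) : th ν a < th ν b :=
  mono_help hab (th_cont ν).continuousOn
    (fun x hx => th_deriv hν (lt_of_le_of_lt ha hx.1))
    (fun x hx => by
      have := rr_pos hν (lt_of_le_of_lt ha hx.1)
      have : 0 < x := by linarith [hx.1]
      positivity)

lemma sin_deriv {ν x c : ℝ} (hν : 0 < ν) (hx : ν < x) :
    HasDerivAt (fun x => Real.sin (th ν x - c)) (Real.cos (th ν x - c) * (rr ν x ^ 2 / x)) x :=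
  ((th_deriv hν hx).sub_const c).sin

lemma cos_deriv {ν x c : ℝ} (hν : 0 < ν) (hx : ν < x) :
    HasDerivAt (fun x => Real.cos (th ν x - c)) (-Real.sin (th ν x - c) * (rr ν x ^ 2 / x)) x :=
  ((th_deriv hν hx).sub_const c).cos

/-- Sturm comparison for the upper bound. -/
lemma sturm_up_pos {ν a b : ℝ} {J V : ℝ → ℝ} (hν : 0 < ν) (h : BSol ν J V) (ha : ν ≤ a)
    (hab : a < b) (hJ : ∀ x ∈ Ioo a b, 0 < J x) : th ν b - th ν a ≤ π := by
  by_contra! hcon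
  -- shrink
  obtain ⟨δ, hδ⟩ : ∃ δ, δ = (th ν b - th ν a - π) / 2 := ⟨_, rfl⟩
  have hδ0 : 0 < δ := by linarith
  obtain ⟨a', ha', hta⟩ := intermediate_value_Ioo hab.le (th_cont ν).continuousOn
    (show th ν a + δ ∈ Ioo (th ν a) (th ν b) by
      constructor <;> linarith [Real.pi_pos])
  obtain ⟨b', hb', htb⟩ := intermediate_value_Ioo hab.le (th_cont ν).continuousOn
    (show th ν a + δ + π ∈ Ioo (th ν a) (th ν b) by
      constructor <;> linarith [Real.pi_pos])
  have hab' : a' < b' := by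
    by_contra! hh
    rcases hh.eq_or_lt with hh | hh
    · rw [hh] at htb; linarith [Real.pi_pos]
    · have := th_mono hν (ha.trans hb'.1.le) hh
      linarith [Real.pi_pos]
  obtain ⟨c, hc⟩ : ∃ c, c = th ν a' := ⟨_, rfl⟩
  have hνa : ν < a' := lt_of_le_of_lt ha ha'.1
  set W : ℝ → ℝ := fun x => J x * (rr ν x * Real.cos (th ν x - c)
    - x ^ 2 * Real.sin (th ν x - c) / (2 * rr ν x ^ 5)) - V x * (Real.sin (th ν x - c) / rr ν x)
    with hW
  have hd : ∀ x, ν < x → HasDerivAt W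
      (J x * Real.sin (th ν x - c) * (x * (x ^ 2 / 4 + ν ^ 2) / rr ν x ^ 9)) x := by
    intro x hx
    have hx0 : 0 < x := hν.trans hx
    have hr := rr_pos hν hx
    have h4 := rr_four hν hx
    have h1 := (h x hx0).1
    have h2 := (h x hx0).2
    have dS := sin_deriv (c := c) hν hx
    have dC := cos_deriv (c := c) hν hx
    have dr := rr_deriv hν hx
    have := (h1.mul ((dr.mul dC).sub (((hasDerivAt_pow 2 x).mul dS).div
      ((dr.pow 5).const_mul 2) (mul_pos two_pos (pow_pos hr 5)).ne'))).sub (h2.mul (dS.div dr hr.ne'))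
    refine this.congr_deriv ?_
    have hν2 : ν ^ 2 = x ^ 2 - rr ν x ^ 4 := by linarith
    simp only [Pi.mul_apply, Pi.sub_apply, Pi.div_apply, Pi.pow_apply]
    rw [hν2]
    generalize rr ν x = r at *
    generalize Real.sin (th ν x - c) = S
    generalize Real.cos (th ν x - c) = C
    push_cast
    field_simp
    ring
  have hlt : W a' < W b' := by
    refine mono_help hab' (fun x hx => (hd x (by linarith [hx.1])).continuousAt.continuousWithinAt)
      (fun x hx => hd x (by linarith [hx.1])) ?_
    intro x hx
    have hνx : ν < x := by linarith [hx.1]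
    have hx0 : 0 < x := hν.trans hνx
    have hr := rr_pos hν hνx
    have hJx := hJ x ⟨by linarith [ha'.1, hx.1], by linarith [hb'.2, hx.2]⟩
    have hS : 0 < Real.sin (th ν x - c) := by
      apply Real.sin_pos_of_pos_of_lt_pi
      · rw [hc]; linarith [th_mono hν hνa.le hx.1]
      · linarith [th_mono hν hνx.le hx.2]
    positivity
  have h1 : 0 < W a' := by
    simp only [hW, hc, sub_self, Real.cos_zero, Real.sin_zero]
    have := hJ a' ha'
    have := rr_pos hν hνa
    simp only [mul_zero, zero_div, sub_zero, mul_one]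
    positivity
  have h2 : W b' < 0 := by
    have e : th ν b' - c = π := by rw [hc]; linarith
    simp only [hW, e, Real.cos_pi, Real.sin_pi]
    have := hJ b' hb'
    have := rr_pos hν (hνa.trans hab')
    simp only [mul_zero, zero_div, sub_zero]
    nlinarith [mul_pos (hJ b' hb') this]
  linarith

lemma sign_const {J : ℝ → ℝ} {a b : ℝ} (hc : ContinuousOn J (Ioo a b))
    (hJ : ∀ x ∈ Ioo a b, J x ≠ 0) : (∀ x ∈ Ioo a b, 0 < J x) ∨ (∀ x ∈ Ioo a b, J x < 0) := by
  by_contra! hcon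
  obtain ⟨⟨x, hx, hx1⟩, ⟨y, hy, hy1⟩⟩ := hcon
  obtain ⟨z, hz, hz1⟩ := isPreconnected_Ioo.intermediate_value hx hy hc
    (show (0 : ℝ) ∈ Icc (J x) (J y) from ⟨hx1, hy1⟩)
  exact hJ z hz hz1

lemma BSol.contJ {ν : ℝ} {J V : ℝ → ℝ} (h : BSol ν J V) {s : Set ℝ} (hs : ∀ x ∈ s, 0 < x) :
    ContinuousOn J s := fun x hx => (h x (hs x hx)).1.continuousAt.continuousWithinAt

lemma BSol.contV {ν : ℝ} {J V : ℝ → ℝ} (h : BSol ν J V) {s : Set ℝ} (hs : ∀ x ∈ s, 0 < x) :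
    ContinuousOn V s := fun x hx => (h x (hs x hx)).2.continuousAt.continuousWithinAt

lemma sturm_up {ν a b : ℝ} {J V : ℝ → ℝ} (hν : 0 < ν) (h : BSol ν J V) (ha : ν ≤ a)
    (hab : a < b) (hJ : ∀ x ∈ Ioo a b, J x ≠ 0) : th ν b - th ν a ≤ π := by
  rcases sign_const (h.contJ fun x hx => by linarith [hx.1]) hJ with hs | hs
  · exact sturm_up_pos hν h ha hab hs
  · exact sturm_up_pos hν h.neg ha hab (fun x hx => by linarith [hs x hx])

/-- First Sturm comparison for the lower bound. -/
lemma sturm_low1 {ν a b : ℝ} {J V : ℝ → ℝ} (hν : 0 < ν) (h : BSol ν J V) (ha : ν < a)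
    (hab : a < b) (hVa : V a = 0) (hVb : V b = 0) (hV : ∀ x ∈ Ioo a b, V x < 0)
    (hJb : J b ≤ 0) : π ≤ th ν b - th ν a := by
  by_contra! hcon
  obtain ⟨c, hc⟩ : ∃ c, c = th ν a := ⟨_, rfl⟩
  set W : ℝ → ℝ := fun x => (rr ν x * J x + V x * (x ^ 2 / (2 * rr ν x ^ 7)))
    * Real.sin (th ν x - c) + V x * (Real.cos (th ν x - c) / rr ν x) with hW
  have hd : ∀ x, ν < x → HasDerivAt W
      (- V x * Real.sin (th ν x - c) * (((1 / 4) * (x ^ 4 / rr ν x ^ 12)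
        + (1 / 2) * (x ^ 2 * (x ^ 2 + 2 * ν ^ 2) / rr ν x ^ 12)) * (rr ν x / x))) x := by
    intro x hx
    have hx0 : 0 < x := hν.trans hx
    have hr := rr_pos hν hx
    have h4 := rr_four hν hx
    have h1 := (h x hx0).1
    have h2 := (h x hx0).2
    have dS := sin_deriv (c := c) hν hx
    have dC := cos_deriv (c := c) hν hx
    have dr := rr_deriv hν hx
    have := (((dr.mul h1).add (h2.mul ((hasDerivAt_pow 2 x).div
      ((dr.pow 7).const_mul 2) (mul_pos two_pos (pow_pos hr 7)).ne'))).mul dS).add (h2.mul (dC.div dr hr.ne'))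
    refine this.congr_deriv ?_
    have hν2 : ν ^ 2 = x ^ 2 - rr ν x ^ 4 := by linarith
    simp only [Pi.mul_apply, Pi.add_apply, Pi.div_apply, Pi.pow_apply]
    rw [hν2]
    generalize rr ν x = r at *
    generalize Real.sin (th ν x - c) = S
    generalize Real.cos (th ν x - c) = C
    push_cast
    field_simp
    ring
  have hlt : W a < W b := by
    refine mono_help hab (fun x hx => (hd x (by linarith [hx.1])).continuousAt.continuousWithinAt)
      (fun x hx => hd x (by linarith [hx.1])) ?_
    intro x hx
    have hνx : ν < x := by linarith [hx.1]
    have hx0 : 0 < x := hν.trans hνx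
    have hr := rr_pos hν hνx
    have hVx : 0 < - V x := by linarith [hV x hx]
    have hS : 0 < Real.sin (th ν x - c) := by
      apply Real.sin_pos_of_pos_of_lt_pi
      · rw [hc]; linarith [th_mono hν ha.le hx.1]
      · linarith [th_mono hν hνx.le hx.2]
    positivity
  have h1 : W a = 0 := by
    simp [hW, hc, hVa]
  have h2 : W b ≤ 0 := by
    have hS : 0 < Real.sin (th ν b - c) := by
      apply Real.sin_pos_of_pos_of_lt_pi
      · rw [hc]; linarith [th_mono hν ha.le hab]
      · linarith
    have hr := rr_pos hν (ha.trans hab)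
    simp only [hW, hVb, zero_mul, add_zero]
    exact mul_nonpos_of_nonpos_of_nonneg (mul_nonpos_of_nonneg_of_nonpos hr.le hJb) hS.le
  linarith

/-- Monotonicity of `V` where `J` is positive. -/
lemma V_anti {ν a b : ℝ} {J V : ℝ → ℝ} (hν : 0 < ν) (h : BSol ν J V) (ha : ν ≤ a)
    (hab : a < b) (hJ : ∀ x ∈ Ioo a b, 0 < J x) : V b < V a := by
  have : - V a < - V b := by
    refine mono_help (f := fun x => - V x) hab
      (h.neg.contV fun x hx => by linarith [hx.1])
      (fun x hx => (h.neg x (by linarith [hx.1])).2) ?_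
    intro x hx
    have := hJ x hx
    have hx0 : 0 < x := by linarith [hx.1]
    have := sq_pos' hν (lt_of_le_of_lt ha hx.1)
    rw [show (ν ^ 2 - x ^ 2) / x * - J x = (x ^ 2 - ν ^ 2) / x * J x by ring]
    positivity
  linarith

/-- Second Sturm comparison for the lower bound. -/
lemma sturm_low2_pos {ν a b : ℝ} {J V : ℝ → ℝ} (hν : 0 < ν) (h : BSol ν J V) (ha : ν < a)
    (hab : a < b) (hVa : V a = 0) (hJ : ∀ x ∈ Ioo a b, 0 < J x) (hJb : J b = 0) :
    π / 2 ≤ th ν b - th ν a := by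
  by_contra! hcon
  obtain ⟨c, hc⟩ : ∃ c, c = th ν a := ⟨_, rfl⟩
  set W : ℝ → ℝ := fun x => V x * Real.cos (th ν x - c)
    + rr ν x ^ 2 * J x * Real.sin (th ν x - c) with hW
  have hd : ∀ x, ν < x → HasDerivAt W
      (J x * Real.sin (th ν x - c) * (x / rr ν x ^ 2)) x := by
    intro x hx
    have hx0 : 0 < x := hν.trans hx
    have hr := rr_pos hν hx
    have h4 := rr_four hν hx
    have h1 := (h x hx0).1
    have h2 := (h x hx0).2
    have dS := sin_deriv (c := c) hν hx
    have dC := cos_deriv (c := c) hν hx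
    have dr := rr_deriv hν hx
    have := (h2.mul dC).add (((dr.pow 2).mul h1).mul dS)
    refine this.congr_deriv ?_
    have hν2 : ν ^ 2 = x ^ 2 - rr ν x ^ 4 := by linarith
    simp only [Pi.mul_apply, Pi.pow_apply]
    rw [hν2]
    generalize rr ν x = r at *
    generalize Real.sin (th ν x - c) = S
    generalize Real.cos (th ν x - c) = C
    push_cast
    field_simp
    ring
  have hlt : W a < W b := by
    refine mono_help hab (fun x hx => (hd x (by linarith [hx.1])).continuousAt.continuousWithinAt)
      (fun x hx => hd x (by linarith [hx.1])) ?_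
    intro x hx
    have hνx : ν < x := by linarith [hx.1]
    have hx0 : 0 < x := hν.trans hνx
    have hr := rr_pos hν hνx
    have hJx := hJ x hx
    have hS : 0 < Real.sin (th ν x - c) := by
      apply Real.sin_pos_of_pos_of_lt_pi
      · rw [hc]; linarith [th_mono hν ha.le hx.1]
      · linarith [th_mono hν hνx.le hx.2, Real.pi_pos]
    positivity
  have h1 : W a = 0 := by
    simp [hW, hc, hVa]
  have h2 : W b ≤ 0 := by
    have hC : 0 < Real.cos (th ν b - c) := by
      apply Real.cos_pos_of_mem_Ioo
      constructor
      · rw [hc]; linarith [th_mono hν ha.le hab, Real.pi_pos]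
      · linarith
    have := V_anti hν h ha.le hab hJ
    simp only [hW, hJb, mul_zero, zero_mul, add_zero]
    exact mul_nonpos_of_nonpos_of_nonneg (by linarith) hC.le
  linarith

lemma sturm_low2 {ν a b : ℝ} {J V : ℝ → ℝ} (hν : 0 < ν) (h : BSol ν J V) (ha : ν < a)
    (hab : a < b) (hVa : V a = 0) (hJ : ∀ x ∈ Ioo a b, J x ≠ 0) (hJb : J b = 0) :
    π / 2 ≤ th ν b - th ν a := by
  rcases sign_const (h.contJ fun x hx => by linarith [hx.1]) hJ with hs | hs
  · exact sturm_low2_pos hν h ha hab hVa hs hJb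
  · exact sturm_low2_pos hν h.neg ha hab (by simp [hVa]) (fun x hx => by linarith [hs x hx])
      (by simp [hJb])

/-- Induction step for the zeros of `V`. -/
lemma step_pos {ν a j₀ j : ℝ} {J V : ℝ → ℝ} (hν : 0 < ν) (h : BSol ν J V) (ha : ν < a)
    (haj : a < j₀) (hj : j₀ < j) (hVa : V a = 0) (hJ : ∀ x ∈ Ioo a j₀, 0 < J x)
    (hJ0 : J j₀ = 0) (hJj : J j = 0) (hJ' : ∀ x ∈ Ioo j₀ j, J x ≠ 0) :
    ∃ b ∈ Ioo j₀ j, V b = 0 ∧ th ν a + π ≤ th ν b := by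
  have hV0 : V j₀ < 0 := by have := V_anti hν h ha.le haj hJ; linarith
  have hj0 : 0 < j₀ := by linarith
  -- sign of `J` on the right
  have hneg : ∀ x ∈ Ioo j₀ j, J x < 0 := by
    rcases sign_const (h.contJ fun x hx => by linarith [hx.1]) hJ' with hs | hs
    · exfalso
      obtain ⟨b, hb, hb0⟩ := exists_hasDerivAt_eq_slope J (fun x => V x / x) hj
        (h.contJ fun x hx => by linarith [hx.1]) (fun x hx => (h x (by linarith [hx.1])).1)
      rw [hJ0, hJj, sub_self, zero_div] at hb0
      have hb' : V b = 0 := by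
        rcases div_eq_zero_iff.mp hb0 with hh | hh
        · exact hh
        · linarith [hb.1]
      have := V_anti hν h (by linarith) hb.1 (fun x hx => hs x ⟨hx.1, hx.2.trans hb.2⟩)
      linarith
    · exact hs
  obtain ⟨b, hb, hb0⟩ := exists_hasDerivAt_eq_slope J (fun x => V x / x) hj
    (h.contJ fun x hx => by linarith [hx.1]) (fun x hx => (h x (by linarith [hx.1])).1)
  rw [hJ0, hJj, sub_self, zero_div] at hb0
  have hb' : V b = 0 := by
    rcases div_eq_zero_iff.mp hb0 with hh | hh
    · exact hh
    · linarith [hb.1]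
  refine ⟨b, hb, hb', ?_⟩
  have := sturm_low1 hν h ha (haj.trans hb.1) hVa hb' (fun x hx => ?_) (hneg b hb).le
  · linarith
  · rcases le_or_gt x j₀ with hx0 | hx0
    · have := V_anti hν h ha.le hx.1 (fun y hy => hJ y ⟨hy.1, by linarith [hy.2]⟩)
      linarith
    · have := V_anti hν h.neg (by linarith) hx.2
        (fun y hy => by linarith [hneg y ⟨by linarith [hy.1], hy.2.trans hb.2⟩])
      linarith

lemma step {ν a j₀ j : ℝ} {J V : ℝ → ℝ} (hν : 0 < ν) (h : BSol ν J V) (ha : ν < a)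
    (haj : a < j₀) (hj : j₀ < j) (hVa : V a = 0) (hJ : ∀ x ∈ Ioo a j₀, J x ≠ 0)
    (hJ0 : J j₀ = 0) (hJj : J j = 0) (hJ' : ∀ x ∈ Ioo j₀ j, J x ≠ 0) :
    ∃ b ∈ Ioo j₀ j, V b = 0 ∧ th ν a + π ≤ th ν b := by
  rcases sign_const (h.contJ fun x hx => by linarith [hx.1]) hJ with hs | hs
  · exact step_pos hν h ha haj hj hVa hs hJ0 hJj hJ'
  · obtain ⟨b, hb, hb1, hb2⟩ := step_pos hν h.neg ha haj hj (by simp [hVa])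
      (fun x hx => by linarith [hs x hx]) (by simp [hJ0]) (by simp [hJj])
      (fun x hx => by simpa using hJ' x hx)
    exact ⟨b, hb, by simpa using hb1, hb2⟩

/-- The first zero. -/
lemma base {ν j ε : ℝ} {J V : ℝ → ℝ} (hν : 0 < ν) (h : BSol ν J V) (hε : 0 < ε)
    (hi : ∀ x, 0 < x → x < ε → 0 < J x ∧ 0 < V x) (hj0 : 0 < j) (hJj : J j = 0)
    (hJ : ∀ x ∈ Ioo 0 j, J x ≠ 0) : ∃ a ∈ Ioo ν j, V a = 0 := by
  have hεj : ε ≤ j := by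
    by_contra! hh
    linarith [(hi j hj0 hh).1]
  have hpos : ∀ x ∈ Ioo 0 j, 0 < J x := by
    rcases sign_const (h.contJ fun x hx => hx.1) hJ with hs | hs
    · exact hs
    · linarith [hs (ε / 2) ⟨by linarith, by linarith⟩, (hi (ε / 2) (by linarith) (by linarith)).1]
  have hVpos : ∀ x, 0 < x → x ≤ ν → x ≤ j → 0 < V x := by
    intro x hx hxν hxj
    rcases lt_or_ge x ε with hxe | hxe
    · exact (hi x hx hxe).2
    · have h1 := (hi (ε / 2) (by linarith) (by linarith)).2
      have : V (ε / 2) < V x := by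
        refine mono_help (by linarith) (h.contV fun y hy => by linarith [hy.1])
          (fun y hy => (h y (by linarith [hy.1])).2) ?_
        intro y hy
        have hy0 : 0 < y := by linarith [hy.1]
        have := hpos y ⟨hy0, by linarith [hy.2]⟩
        have : 0 < ν ^ 2 - y ^ 2 := by nlinarith [hy.2]
        positivity
      linarith
  have hνj : ν < j := by
    by_contra! hh
    have : J (ε / 2) < J j := by
      refine mono_help (by linarith) (h.contJ fun y hy => by linarith [hy.1])
          (fun y hy => (h y (by linarith [hy.1])).1) ?_
      intro y hy
      have hy0 : 0 < y := by linarith [hy.1]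
      have := hVpos y hy0 (by linarith [hy.2]) hy.2.le
      positivity
    linarith [(hi (ε / 2) (by linarith) (by linarith)).1]
  obtain ⟨b, hb, hb0⟩ := exists_hasDerivAt_eq_slope J (fun x => V x / x) hνj
    (h.contJ fun x hx => by linarith [hx.1]) (fun x hx => (h x (by linarith [hx.1])).1)
  have hVb : V b < 0 := by
    have h1 := hpos ν ⟨hν, hνj⟩
    have h2 : (J j - J ν) / (j - ν) < 0 := div_neg_of_neg_of_pos (by linarith) (by linarith)
    rw [← hb0] at h2
    have hb1 : 0 < b := by linarith [hb.1]
    by_contra! hh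
    have : 0 ≤ V b / b := by positivity
    linarith
  obtain ⟨a, ha, ha0⟩ := intermediate_value_Ioo' hb.1.le
    (h.contV fun x hx => by linarith [hx.1] : ContinuousOn V (Icc ν b))
    (show (0 : ℝ) ∈ Ioo (V b) (V ν) from ⟨hVb, hVpos ν hν le_rfl hνj.le⟩)
  exact ⟨a, ⟨ha.1, ha.2.trans hb.2⟩, ha0⟩

lemma pred_zero {ν : ℝ} {k : ℕ} {j : ℝ} (hj : IsKthBesselZero ν (k + 2) j) :
    ∃ j₀, IsKthBesselZero ν (k + 1) j₀ ∧ j₀ < j ∧ ∀ x ∈ Ioo j₀ j, besselJ ν x ≠ 0 := by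
  obtain ⟨h0, h1, h2⟩ := hj
  set S := {t : ℝ | t ∈ Set.Ioo 0 j ∧ besselJ ν t = 0} with hS
  have e1 : k + 2 - 1 = k + 1 := by omega
  rw [e1] at h2
  have hfin : S.Finite := Set.finite_of_encard_eq_coe h2
  have hne : S.Nonempty := by
    rw [← Set.encard_ne_zero, h2]; simp
  obtain ⟨m, hm, hmax⟩ := Set.exists_max_image S id hfin hne
  simp only [id] at hmax
  refine ⟨m, ⟨hm.1.1, hm.2, ?_⟩, hm.1.2, ?_⟩
  · have : {t : ℝ | t ∈ Set.Ioo 0 m ∧ besselJ ν t = 0} = S \ {m} := by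
      ext t
      simp only [hS, mem_ofPred_eq, mem_sdiff, mem_singleton_iff, mem_Ioo]
      constructor
      · rintro ⟨⟨a, b⟩, c⟩
        exact ⟨⟨⟨a, b.trans hm.1.2⟩, c⟩, b.ne⟩
      · rintro ⟨⟨⟨a, b⟩, c⟩, d⟩
        exact ⟨⟨a, lt_of_le_of_ne (hmax t ⟨⟨a, b⟩, c⟩) d⟩, c⟩
    rw [this]
    have h3 := Set.encard_sdiff_singleton_add_one hm
    rw [h2] at h3
    simp only [Nat.add_sub_cancel]
    push_cast at h3
    exact (ENat.add_left_injective_of_ne_top (n := 1) (by simp)) h3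
  · intro x hx hx0
    have := hmax x ⟨⟨hm.1.1.trans hx.1, hx.2⟩, hx0⟩
    linarith [hx.1]

lemma first_zero {ν j : ℝ} (hj : IsKthBesselZero ν 1 j) : ∀ x ∈ Ioo 0 j, besselJ ν x ≠ 0 := by
  obtain ⟨h0, h1, h2⟩ := hj
  intro x hx hx0
  have h3 : {t : ℝ | t ∈ Set.Ioo 0 j ∧ besselJ ν t = 0} = ∅ := by
    rw [← Set.encard_eq_zero, h2]; simp
  have : x ∈ {t : ℝ | t ∈ Set.Ioo 0 j ∧ besselJ ν t = 0} := ⟨hx, hx0⟩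
  rw [h3] at this
  exact this

lemma main_ind (ν : ℝ) (hν : 0 < ν) (k : ℕ) : ∀ j, IsKthBesselZero ν (k + 1) j →
    (∃ a ∈ Ioo ν j, besselV ν a = 0 ∧ (∀ x ∈ Ioo a j, besselJ ν x ≠ 0) ∧ (k : ℝ) * π ≤ th ν a) ∧
    th ν j ≤ (k + 1) * π := by
  have hs := bessel_sol ν hν
  obtain ⟨ε, hε, hi⟩ := bessel_init ν hν
  induction k with
  | zero =>
    intro j hj
    have hf := first_zero hj
    obtain ⟨a, ha, hVa⟩ := base hν hs hε hi hj.1 hj.2.1 hf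
    have hνj : ν < j := ha.1.trans ha.2
    refine ⟨⟨a, ha, hVa, fun x hx => hf x ⟨by linarith [hx.1, ha.1], hx.2⟩, ?_⟩, ?_⟩
    · have := th_mono hν le_rfl ha.1
      rw [th_self] at this
      simpa using this.le
    · have := sturm_up hν hs le_rfl hνj (fun x hx => hf x ⟨by linarith [hx.1], hx.2⟩)
      rw [th_self] at this
      simpa using this
  | succ k ih =>
    intro j hj
    obtain ⟨j₀, hj₀, hlt, hne⟩ := pred_zero hj
    obtain ⟨⟨a, ha, hVa, hJa, hta⟩, hup⟩ := ih j₀ hj₀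
    obtain ⟨b, hb, hVb, htb⟩ := step hν hs ha.1 ha.2 hlt hVa hJa hj₀.2.1 hj.2.1 hne
    have hνj : ν < j₀ := ha.1.trans ha.2
    refine ⟨⟨b, ⟨hνj.trans hb.1, hb.2⟩, hVb, fun x hx => hne x ⟨hb.1.trans hx.1, hx.2⟩, ?_⟩, ?_⟩
    · push_cast; linarith
    · have := sturm_up hν hs hνj.le hlt hne
      push_cast; linarith

lemma conv_low {ν σ : ℝ} (hν : 0 < ν) (hσ : 0 < σ) :
    th ν (ν * (1 + 2 * σ ^ 2)) < 8 / 3 * ν * σ ^ 3 := by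
  have hd : ∀ s ∈ Ioo 0 σ, HasDerivAt (fun s => 8 / 3 * ν * s ^ 3 - th ν (ν * (1 + 2 * s ^ 2)))
      (8 * ν * s ^ 2 - rr ν (ν * (1 + 2 * s ^ 2)) ^ 2 / (ν * (1 + 2 * s ^ 2)) * (ν * (4 * s))) s := by
    intro s hs
    have hs0 : 0 < s := hs.1
    have hx : ν < ν * (1 + 2 * s ^ 2) := by
      have : 0 < ν * s ^ 2 := by positivity
      linarith
    have h1 : HasDerivAt (fun s : ℝ => ν * (1 + 2 * s ^ 2)) (ν * (4 * s)) s :=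
      ((((hasDerivAt_pow 2 s).const_mul 2).const_add 1).const_mul ν).congr_deriv (by
        push_cast; ring)
    have h2 := (th_deriv hν hx).comp s h1
    exact (((hasDerivAt_pow 3 s).const_mul (8 / 3 * ν)).sub h2).congr_deriv (by push_cast; ring)
  have := mono_help hσ (Continuous.continuousOn (by have := th_cont ν; fun_prop)) hd (by
    intro s hs
    have hs0 : 0 < s := hs.1
    have hx : ν < ν * (1 + 2 * s ^ 2) := by
      have : 0 < ν * s ^ 2 := by positivity
      linarith
    have hr : rr ν (ν * (1 + 2 * s ^ 2)) ^ 2 < ν * (1 + 2 * s ^ 2) * (2 * s) := by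
      refine lt_of_pow_lt_pow_left₀ 2 (by positivity) ?_
      rw [← pow_mul, rr_four hν hx]
      have : 0 < ν ^ 2 * (s ^ 4 * 12 + 16 * s ^ 6) := by positivity
      nlinarith
    have hp : 0 < ν * (1 + 2 * s ^ 2) := by positivity
    have : rr ν (ν * (1 + 2 * s ^ 2)) ^ 2 / (ν * (1 + 2 * s ^ 2)) < 2 * s := by
      rw [div_lt_iff₀ hp]; linarith
    have h4 : 0 < ν * (4 * s) := by positivity
    nlinarith [mul_lt_mul_of_pos_right this h4])
  simp [th_self] at this
  linarith

lemma conv_up {ν σ : ℝ} (hν : 0 < ν) (hσ : 0 < σ) :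
    8 / 3 * ν * σ ^ 3 < th ν (ν * (1 + 2 * σ ^ 2 + 6 / 5 * σ ^ 4)) := by
  have hd : ∀ s ∈ Ioo 0 σ, HasDerivAt
      (fun s => th ν (ν * (1 + 2 * s ^ 2 + 6 / 5 * s ^ 4)) - 8 / 3 * ν * s ^ 3)
      (rr ν (ν * (1 + 2 * s ^ 2 + 6 / 5 * s ^ 4)) ^ 2 / (ν * (1 + 2 * s ^ 2 + 6 / 5 * s ^ 4))
        * (ν * (4 * s + 24 / 5 * s ^ 3)) - 8 * ν * s ^ 2) s := by
    intro s hs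
    have hs0 : 0 < s := hs.1
    have hx : ν < ν * (1 + 2 * s ^ 2 + 6 / 5 * s ^ 4) := by
      have : 0 < ν * (2 * s ^ 2 + 6 / 5 * s ^ 4) := by positivity
      linarith
    have h1 : HasDerivAt (fun s : ℝ => ν * (1 + 2 * s ^ 2 + 6 / 5 * s ^ 4))
        (ν * (4 * s + 24 / 5 * s ^ 3)) s :=
      (((((hasDerivAt_pow 2 s).const_mul 2).const_add 1).add
        ((hasDerivAt_pow 4 s).const_mul (6 / 5))).const_mul ν).congr_deriv (by
        push_cast; ring)
    have h2 := (th_deriv hν hx).comp s h1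
    exact (h2.sub ((hasDerivAt_pow 3 s).const_mul (8 / 3 * ν))).congr_deriv (by push_cast; ring)
  have := mono_help hσ (Continuous.continuousOn (by have := th_cont ν; fun_prop)) hd (by
    intro s hs
    have hs0 : 0 < s := hs.1
    have hx : ν < ν * (1 + 2 * s ^ 2 + 6 / 5 * s ^ 4) := by
      have : 0 < ν * (2 * s ^ 2 + 6 / 5 * s ^ 4) := by positivity
      linarith
    have hr : ν * (1 + 2 * s ^ 2 + 6 / 5 * s ^ 4) * (2 * s) <
        rr ν (ν * (1 + 2 * s ^ 2 + 6 / 5 * s ^ 4)) ^ 2 * (1 + 6 / 5 * s ^ 2) := by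
      refine lt_of_pow_lt_pow_left₀ 2 (by positivity) ?_
      rw [mul_pow (rr _ _ ^ 2), ← pow_mul, rr_four hν hx]
      rw [← sub_pos]
      ring_nf
      positivity
    have hp : 0 < ν * (1 + 2 * s ^ 2 + 6 / 5 * s ^ 4) := by positivity
    rw [sub_pos, div_mul_eq_mul_div, lt_div_iff₀ hp]
    have h4 : 0 < ν * (4 * s) := by positivity
    nlinarith [mul_lt_mul_of_pos_right hr h4])
  simp [th_self] at this
  linarith

lemma cube_root {a : ℝ} (ha : 0 < a) : ∃ n, 0 < n ∧ n ^ 3 = a ∧ a ^ ((1 : ℝ) / 3) = n ∧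
    a ^ ((2 : ℝ) / 3) = n ^ 2 ∧ a ^ ((4 : ℝ) / 3) = n ^ 4 ∧ a ^ (-(1 : ℝ) / 3) = 1 / n := by
  refine ⟨a ^ ((1 : ℝ) / 3), by positivity, ?_, rfl, ?_, ?_, ?_⟩
  · rw [← Real.rpow_natCast, ← Real.rpow_mul ha.le]; norm_num
  · rw [← Real.rpow_natCast, ← Real.rpow_mul ha.le]; norm_num
  · rw [← Real.rpow_natCast, ← Real.rpow_mul ha.le]; norm_num
  · rw [neg_div, Real.rpow_neg ha.le, one_div, one_div]

theorem stmt_9 (ν : ℝ) (hν : 0 < ν) (k : ℕ) (hk : 1 ≤ k) (j : ℝ)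
    (hj : IsKthBesselZero ν k j) :
    ν + ((3 * Real.pi / 8) * (4 * (k : ℝ) - 2)) ^ ((2 : ℝ) / 3) * (2 : ℝ) ^ (-(1 : ℝ) / 3)
        * ν ^ ((1 : ℝ) / 3) < j ∧
    j < ν + ((3 * Real.pi / 2) * (k : ℝ)) ^ ((2 : ℝ) / 3) * (2 : ℝ) ^ (-(1 : ℝ) / 3)
        * ν ^ ((1 : ℝ) / 3)
      + (3 / 20) * ((3 * Real.pi / 2) * (k : ℝ)) ^ ((4 : ℝ) / 3) * (2 : ℝ) ^ ((1 : ℝ) / 3)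
        * ν ^ (-(1 : ℝ) / 3) := by
  obtain ⟨k, rfl⟩ : ∃ m, k = m + 1 := ⟨k - 1, by omega⟩
  obtain ⟨⟨a, ha, hVa, hJa, hta⟩, hup⟩ := main_ind ν hν k j hj
  have hlow := sturm_low2 hν (bessel_sol ν hν) ha.1 ha.2 hVa hJa hj.2.1
  have hνj : ν < j := ha.1.trans ha.2
  have hpi := Real.pi_pos
  have hk0 : (0 : ℝ) ≤ k := by positivity
  obtain ⟨d, hd0, hd3, hd1, hd2, hd4, hd5⟩ := cube_root (a := 2) (by norm_num)
  obtain ⟨w, hw0, hw3, hw1, hw2, hw4, hw5⟩ := cube_root hν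
  constructor
  · have hN : 0 < (3 * Real.pi / 8) * (4 * ((k + 1 : ℕ) : ℝ) - 2) := by
      push_cast
      have : (0 : ℝ) < 4 * (k + 1) - 2 := by linarith
      positivity
    obtain ⟨n, hn0, hn3, hn1, hn2, hn4, hn5⟩ := cube_root hN
    rw [hn2, hd5, hw1]
    have hσ : 0 < n / (d ^ 2 * w) := by positivity
    have key := conv_low hν hσ
    have e1 : ν * (1 + 2 * (n / (d ^ 2 * w)) ^ 2) = ν + n ^ 2 * (1 / d) * w := by
      rw [← hw3]; field_simp
      linear_combination (-n ^ 2) * hd3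
    have e2 : 8 / 3 * ν * (n / (d ^ 2 * w)) ^ 3 = 2 / 3 * n ^ 3 := by
      rw [← hw3]; field_simp
      linear_combination (-2 * (d ^ 3 + 2)) * hd3
    rw [e1, e2, hn3] at key
    push_cast at key
    by_contra! hh
    have : th ν j ≤ th ν (ν + n ^ 2 * (1 / d) * w) := by
      rcases hh.eq_or_lt with h | h
      · rw [h]
      · exact (th_mono hν hνj.le h).le
    nlinarith
  · have hN : 0 < (3 * Real.pi / 2) * ((k + 1 : ℕ) : ℝ) := by positivity
    obtain ⟨n, hn0, hn3, hn1, hn2, hn4, hn5⟩ := cube_root hN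
    rw [hn2, hn4, hd5, hd1, hw1, hw5]
    have hσ : 0 < n / (d ^ 2 * w) := by positivity
    have key := conv_up hν hσ
    have e1 : ν * (1 + 2 * (n / (d ^ 2 * w)) ^ 2 + 6 / 5 * (n / (d ^ 2 * w)) ^ 4)
        = ν + n ^ 2 * (1 / d) * w + 3 / 20 * n ^ 4 * d * (1 / w) := by
      have f1 : 2 * (n / (d ^ 2 * w)) ^ 2 = n ^ 2 / (d * w ^ 2) := by
        field_simp; linear_combination (-1) * hd3
      have f2 : 6 / 5 * (n / (d ^ 2 * w)) ^ 4 = 3 / 20 * n ^ 4 * d / w ^ 4 := by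
        have : d ^ 9 = 8 := by rw [show d ^ 9 = (d ^ 3) ^ 3 by ring, hd3]; norm_num
        field_simp; linear_combination (-15) * this
      rw [f1, f2, ← hw3]; field_simp
    have e2 : 8 / 3 * ν * (n / (d ^ 2 * w)) ^ 3 = 2 / 3 * n ^ 3 := by
      rw [← hw3]; field_simp
      linear_combination (-2 * (d ^ 3 + 2)) * hd3
    rw [e1, e2, hn3] at key
    push_cast at key
    by_contra! hh
    have hb : ν ≤ ν + n ^ 2 * (1 / d) * w + 3 / 20 * n ^ 4 * d * (1 / w) := by
      have : 0 < n ^ 2 * (1 / d) * w + 3 / 20 * n ^ 4 * d * (1 / w) := by positivity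
      linarith
    have : th ν (ν + n ^ 2 * (1 / d) * w + 3 / 20 * n ^ 4 * d * (1 / w)) ≤ th ν j := by
      rcases hh.eq_or_lt with h | h
      · rw [h]
      · exact (th_mono hν hb h).le
    nlinarith
end
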